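/- (Adequacy of convex DPO rewriting) Let Σ be a monoidal signature and R a rewriting system on Σ-terms, i.e. a set of pairs of Σ-terms (l, r) with l, r : i → j. For Σ-terms d, e : n → m, the syntactic rewriting d ⇒_R e holds if and only if the interfaced hypergraph D ← n+m (obtained from the interpretation ⟦d⟧ = (n → D ← m) by combining the two legs into a single map n+m → D) rewrites convexly to E ← n+m (obtained likewise from ⟦e⟧) via the DPO rule L ← i+j → R_g obtained from ⟦l⟧ = (i → L ← j) and ⟦r⟧ = (i → R_g ← j) for some (l,r) in R. -/

import Mathlib

namespace SDRT

/-- A directed hypergraph: a set of nodes and, for each hyperedge, an ordered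
list of source nodes and an ordered list of target nodes.  A `(k,l)`-hyperedge
is a hyperedge with `k` sources and `l` targets. -/
structure Hyp : Type 1 where
  V : Type
  E : Type
  src : E → List V
  tgt : E → List V

namespace Hyp

/-- The set of pairs `(h, i)` such that `v` is the `i`-th target of the hyperedge `h`.
The in-degree of `v` is the number of such pairs. -/
def inPairs (G : Hyp) (v : G.V) : Set (G.E × ℕ) := {p | (G.tgt p.1)[p.2]? = some v}

/-- The set of pairs `(h, j)` such that `v` is the `j`-th source of the hyperedge `h`.
The out-degree of `v` is the number of such pairs. -/
def outPairs (G : Hyp) (v : G.V) : Set (G.E × ℕ) := {p | (G.src p.1)[p.2]? = some v}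

/-- `v` has in-degree `0`. -/
def inDegZero (G : Hyp) (v : G.V) : Prop := G.inPairs v = ∅

/-- `v` has in-degree `1`. -/
def inDegOne (G : Hyp) (v : G.V) : Prop := ∃! p, p ∈ G.inPairs v

/-- `v` has out-degree `0`. -/
def outDegZero (G : Hyp) (v : G.V) : Prop := G.outPairs v = ∅

/-- `v` has out-degree `1`. -/
def outDegOne (G : Hyp) (v : G.V) : Prop := ∃! p, p ∈ G.outPairs v

/-- `h'` is a successor of `h` if some node is both a target of `h` and a source of `h'`. -/
def Successor (G : Hyp) (h h' : G.E) : Prop := ∃ v, v ∈ G.tgt h ∧ v ∈ G.src h'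

/-- `l` is a path (nonempty sequence of hyperedges, each a successor of the previous)
from the node `v` to the node `v'`: `v` is among the sources of the first hyperedge
and `v'` among the targets of the last one. -/
def PathFrom (G : Hyp) (l : List G.E) (v v' : G.V) : Prop :=
  ∃ hne : l ≠ [], l.Chain' G.Successor ∧ v ∈ G.src (l.head hne) ∧ v' ∈ G.tgt (l.getLast hne)

/-- `l` is a path from the hyperedge `h` to the hyperedge `h'`. -/
def EdgePath (G : Hyp) (l : List G.E) (h h' : G.E) : Prop :=
  ∃ hne : l ≠ [], l.Chain' G.Successor ∧ l.head hne = h ∧ l.getLast hne = h'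

/-- A hypergraph is acyclic if there is no path from a node to itself. -/
def Acyclic (G : Hyp) : Prop := ∀ (v : G.V) (l : List G.E), ¬ G.PathFrom l v v

end Hyp

/-- A subhypergraph: a set of nodes and hyperedges closed under taking the sources
and targets of its hyperedges. -/
structure SubHyp (G : Hyp) where
  nodes : Set G.V
  edges : Set G.E
  src_mem : ∀ e ∈ edges, ∀ v ∈ G.src e, v ∈ nodes
  tgt_mem : ∀ e ∈ edges, ∀ v ∈ G.tgt e, v ∈ nodes

/-- A subhypergraph `H` of `G` is convex if every path in `G` between nodes of `H`
consists only of hyperedges of `H`. -/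
def SubHyp.Convex {G : Hyp} (H : SubHyp G) : Prop :=
  ∀ v ∈ H.nodes, ∀ v' ∈ H.nodes, ∀ l, G.PathFrom l v v' → ∀ e ∈ l, e ∈ H.edges

/-- The hypergraph underlying a subhypergraph. -/
def SubHyp.toHyp {G : Hyp} (H : SubHyp G) : Hyp where
  V := H.nodes
  E := H.edges
  src := fun e => (G.src e.1).pmap (fun v hv => (⟨v, hv⟩ : H.nodes))
    (fun v hv => H.src_mem e.1 e.2 v hv)
  tgt := fun e => (G.tgt e.1).pmap (fun v hv => (⟨v, hv⟩ : H.nodes))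
    (fun v hv => H.tgt_mem e.1 e.2 v hv)

/-- A cospan of hypergraphs with discrete interfaces `m → G ← n`. -/
structure Cospan (m n : Type) : Type 1 where
  G : Hyp
  inp : m → G.V
  out : n → G.V

namespace Cospan

/-- A cospan is monogamous if both legs are injective, nodes in the image of the
input leg have in-degree 0, all other nodes have in-degree 1, nodes in the image
of the output leg have out-degree 0, and all other nodes have out-degree 1. -/
def Monogamous {m n : Type} (A : Cospan m n) : Prop :=
  Function.Injective A.inp ∧ Function.Injective A.out ∧
  (∀ v ∈ Set.range A.inp, A.G.inDegZero v) ∧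
  (∀ v ∉ Set.range A.inp, A.G.inDegOne v) ∧
  (∀ v ∈ Set.range A.out, A.G.outDegZero v) ∧
  (∀ v ∉ Set.range A.out, A.G.outDegOne v)

/-- A cospan is acyclic if its carrier is. -/
def Acyclic {m n : Type} (A : Cospan m n) : Prop := A.G.Acyclic

/-- Composition of cospans by pushout: glue `G` and `H` along the common
interface `n`, identifying `A.out k` with `B.inp k` for every `k : n`. -/
def comp {m n p : Type} (A : Cospan m n) (B : Cospan n p) : Cospan m p where
  G := { V := Quot (fun x y : A.G.V ⊕ B.G.V =>
                      ∃ k : n, x = Sum.inl (A.out k) ∧ y = Sum.inr (B.inp k))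
         E := A.G.E ⊕ B.G.E
         src := Sum.elim (fun e => (A.G.src e).map (fun v => Quot.mk _ (Sum.inl v)))
                         (fun e => (B.G.src e).map (fun v => Quot.mk _ (Sum.inr v)))
         tgt := Sum.elim (fun e => (A.G.tgt e).map (fun v => Quot.mk _ (Sum.inl v)))
                         (fun e => (B.G.tgt e).map (fun v => Quot.mk _ (Sum.inr v))) }
  inp := fun x => Quot.mk _ (Sum.inl (A.inp x))
  out := fun y => Quot.mk _ (Sum.inr (B.out y))

/-- Monoidal product (tensor) of cospans: disjoint union of the carriers, with
the evident interface maps. -/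
def tensor {m₁ n₁ m₂ n₂ : Type} (A : Cospan m₁ n₁) (B : Cospan m₂ n₂) :
    Cospan (m₁ ⊕ m₂) (n₁ ⊕ n₂) where
  G := { V := A.G.V ⊕ B.G.V
         E := A.G.E ⊕ B.G.E
         src := Sum.elim (fun e => (A.G.src e).map Sum.inl) (fun e => (B.G.src e).map Sum.inr)
         tgt := Sum.elim (fun e => (A.G.tgt e).map Sum.inl) (fun e => (B.G.tgt e).map Sum.inr) }
  inp := Sum.elim (fun x => Sum.inl (A.inp x)) (fun x => Sum.inr (B.inp x))
  out := Sum.elim (fun y => Sum.inl (A.out y)) (fun y => Sum.inr (B.out y))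

/-- The identity cospan on `k`: the discrete hypergraph on `k` with identity legs. -/
def idCospan (k : Type) : Cospan k k where
  G := { V := k, E := Empty, src := Empty.elim, tgt := Empty.elim }
  inp := id
  out := id

end Cospan

/-- An isomorphism of cospans: a hypergraph isomorphism of the carriers commuting
with the interface legs. -/
structure CospanIso {m n : Type} (A B : Cospan m n) where
  nodeEquiv : A.G.V ≃ B.G.V
  edgeEquiv : A.G.E ≃ B.G.E
  src_eq : ∀ e, B.G.src (edgeEquiv e) = (A.G.src e).map nodeEquiv
  tgt_eq : ∀ e, B.G.tgt (edgeEquiv e) = (A.G.tgt e).map nodeEquiv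
  inp_eq : ∀ x, nodeEquiv (A.inp x) = B.inp x
  out_eq : ∀ y, nodeEquiv (A.out y) = B.out y

/-- Two cospans are isomorphic if there is an isomorphism between them. -/
def Cospan.Isomorphic {m n : Type} (A B : Cospan m n) : Prop := Nonempty (CospanIso A B)

/-- A homomorphism of hypergraphs: maps nodes to nodes and hyperedges to
hyperedges, preserving the ordered lists of sources and targets. -/
structure HypHom (G H : Hyp) where
  nodeMap : G.V → H.V
  edgeMap : G.E → H.E
  src_eq : ∀ e, H.src (edgeMap e) = (G.src e).map nodeMap
  tgt_eq : ∀ e, H.tgt (edgeMap e) = (G.tgt e).map nodeMap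

/-- The image of a hypergraph homomorphism, as a subhypergraph of the codomain. -/
def HypHom.image {G H : Hyp} (f : HypHom G H) : SubHyp H where
  nodes := Set.range f.nodeMap
  edges := Set.range f.edgeMap
  src_mem := by
    rintro e ⟨e', rfl⟩ v hv
    rw [f.src_eq] at hv
    rcases List.mem_map.mp hv with ⟨w, -, rfl⟩
    exact ⟨w, rfl⟩
  tgt_mem := by
    rintro e ⟨e', rfl⟩ v hv
    rw [f.tgt_eq] at hv
    rcases List.mem_map.mp hv with ⟨w, -, rfl⟩
    exact ⟨w, rfl⟩

/-! ### Labelled hypergraphs -/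

/-- A monoidal signature: a set of operation symbols, each with an arity and a
coarity. -/
structure MonSig : Type 1 where
  ops : Type
  ar : ops → ℕ
  coar : ops → ℕ

/-- A `Σ`-labelled hypergraph: each hyperedge carries a label whose arity and
coarity match the numbers of sources and targets of the hyperedge. -/
structure LHyp (S : MonSig) extends Hyp where
  label : E → S.ops
  src_len : ∀ e, (src e).length = S.ar (label e)
  tgt_len : ∀ e, (tgt e).length = S.coar (label e)

/-- A homomorphism of `Σ`-labelled hypergraphs. -/
structure LHom {S : MonSig} (G H : LHyp S) where
  nodeMap : G.V → H.V
  edgeMap : G.E → H.E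
  src_eq : ∀ e, H.src (edgeMap e) = (G.src e).map nodeMap
  tgt_eq : ∀ e, H.tgt (edgeMap e) = (G.tgt e).map nodeMap
  label_eq : ∀ e, H.label (edgeMap e) = G.label e

/-- Composition (diagrammatic order) of homomorphisms. -/
def LHom.comp {S : MonSig} {G H K : LHyp S} (f : LHom G H) (g : LHom H K) : LHom G K where
  nodeMap := g.nodeMap ∘ f.nodeMap
  edgeMap := g.edgeMap ∘ f.edgeMap
  src_eq := by intro e; simp only [Function.comp_apply, g.src_eq, f.src_eq, List.map_map]
  tgt_eq := by intro e; simp only [Function.comp_apply, g.tgt_eq, f.tgt_eq, List.map_map]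
  label_eq := by intro e; simp only [Function.comp_apply, g.label_eq, f.label_eq]

/-- The underlying homomorphism of unlabelled hypergraphs. -/
def LHom.toHypHom {S : MonSig} {G H : LHyp S} (f : LHom G H) : HypHom G.toHyp H.toHyp :=
  ⟨f.nodeMap, f.edgeMap, f.src_eq, f.tgt_eq⟩

/-- The discrete `Σ`-labelled hypergraph on a set `I` of nodes (no hyperedges). -/
def discreteLHyp (S : MonSig) (I : Type) : LHyp S where
  V := I
  E := Empty
  src := Empty.elim
  tgt := Empty.elim
  label := fun e => e.elim
  src_len := fun e => e.elim
  tgt_len := fun e => e.elim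

/-- A homomorphism out of a discrete hypergraph is just a function on nodes. -/
def discreteHom {S : MonSig} {I : Type} (C : LHyp S) (c : I → C.V) :
    LHom (discreteLHyp S I) C where
  nodeMap := c
  edgeMap := Empty.elim
  src_eq := fun e => e.elim
  tgt_eq := fun e => e.elim
  label_eq := fun e => e.elim

/-- The square `f ; inA = g ; inB` is a pushout of `Σ`-labelled hypergraphs. -/
def IsPushout {S : MonSig} {X A B P : LHyp S} (f : LHom X A) (g : LHom X B)
    (inA : LHom A P) (inB : LHom B P) : Prop :=
  f.comp inA = g.comp inB ∧
  ∀ (W : LHyp S) (u : LHom A W) (w : LHom B W), f.comp u = g.comp w →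
    ∃! t : LHom P W, inA.comp t = u ∧ inB.comp t = w

/-- A cospan of `Σ`-labelled hypergraphs with discrete interfaces. -/
structure LCospan (S : MonSig) (m n : Type) : Type 1 where
  G : LHyp S
  inp : m → G.V
  out : n → G.V

namespace LCospan

/-- The underlying unlabelled cospan. -/
def toCospan {S : MonSig} {m n : Type} (A : LCospan S m n) : Cospan m n :=
  ⟨A.G.toHyp, A.inp, A.out⟩

def Monogamous {S : MonSig} {m n : Type} (A : LCospan S m n) : Prop := A.toCospan.Monogamous

def Acyclic {S : MonSig} {m n : Type} (A : LCospan S m n) : Prop := A.G.toHyp.Acyclic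

/-- Composition of labelled cospans by pushout (gluing along the common interface). -/
def comp {S : MonSig} {m n p : Type} (A : LCospan S m n) (B : LCospan S n p) :
    LCospan S m p where
  G := { V := Quot (fun x y : A.G.V ⊕ B.G.V =>
                      ∃ k : n, x = Sum.inl (A.out k) ∧ y = Sum.inr (B.inp k))
         E := A.G.E ⊕ B.G.E
         src := Sum.elim (fun e => (A.G.src e).map (fun v => Quot.mk _ (Sum.inl v)))
                         (fun e => (B.G.src e).map (fun v => Quot.mk _ (Sum.inr v)))
         tgt := Sum.elim (fun e => (A.G.tgt e).map (fun v => Quot.mk _ (Sum.inl v)))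
                         (fun e => (B.G.tgt e).map (fun v => Quot.mk _ (Sum.inr v)))
         label := Sum.elim A.G.label B.G.label
         src_len := by rintro (e | e) <;> simp [A.G.src_len, B.G.src_len]
         tgt_len := by rintro (e | e) <;> simp [A.G.tgt_len, B.G.tgt_len] }
  inp := fun x => Quot.mk _ (Sum.inl (A.inp x))
  out := fun y => Quot.mk _ (Sum.inr (B.out y))

/-- Monoidal product (disjoint union) of labelled cospans. -/
def tensor {S : MonSig} {m₁ n₁ m₂ n₂ : Type} (A : LCospan S m₁ n₁) (B : LCospan S m₂ n₂) :
    LCospan S (m₁ ⊕ m₂) (n₁ ⊕ n₂) where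
  G := { V := A.G.V ⊕ B.G.V
         E := A.G.E ⊕ B.G.E
         src := Sum.elim (fun e => (A.G.src e).map Sum.inl) (fun e => (B.G.src e).map Sum.inr)
         tgt := Sum.elim (fun e => (A.G.tgt e).map Sum.inl) (fun e => (B.G.tgt e).map Sum.inr)
         label := Sum.elim A.G.label B.G.label
         src_len := by rintro (e | e) <;> simp [A.G.src_len, B.G.src_len]
         tgt_len := by rintro (e | e) <;> simp [A.G.tgt_len, B.G.tgt_len] }
  inp := Sum.elim (fun x => Sum.inl (A.inp x)) (fun x => Sum.inr (B.inp x))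
  out := Sum.elim (fun y => Sum.inl (A.out y)) (fun y => Sum.inr (B.out y))

/-- Reindexing of the interfaces of a cospan along functions. -/
def reind {S : MonSig} {m n m' n' : Type} (A : LCospan S m n) (f : m' → m) (g : n' → n) :
    LCospan S m' n' :=
  ⟨A.G, A.inp ∘ f, A.out ∘ g⟩

end LCospan

/-- An isomorphism of labelled cospans. -/
structure LCospanIso {S : MonSig} {m n : Type} (A B : LCospan S m n) where
  nodeEquiv : A.G.V ≃ B.G.V
  edgeEquiv : A.G.E ≃ B.G.E
  src_eq : ∀ e, B.G.src (edgeEquiv e) = (A.G.src e).map nodeEquiv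
  tgt_eq : ∀ e, B.G.tgt (edgeEquiv e) = (A.G.tgt e).map nodeEquiv
  label_eq : ∀ e, B.G.label (edgeEquiv e) = A.G.label e
  inp_eq : ∀ x, nodeEquiv (A.inp x) = B.inp x
  out_eq : ∀ y, nodeEquiv (A.out y) = B.out y

/-- `A` is a monogamous acyclic cospan. -/
def MonAcyclic {S : MonSig} {m n : Type} (A : LCospan S m n) : Prop :=
  A.Monogamous ∧ A.Acyclic

/-- `(C, c, g)` is a pushout complement of the mono `f : L → G` along the
interface `i + j → L` of the rule. -/
def IsPushoutComplement {S : MonSig} {i j n m : Type} (L : LCospan S i j) (Gc : LCospan S n m)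
    (f : LHom L.G Gc.G) (C : LHyp S) (c : i ⊕ j → C.V) (g : LHom C Gc.G) : Prop :=
  IsPushout (discreteHom L.G (Sum.elim L.inp L.out)) (discreteHom C c) f g

/-- `(C, c, g)` is a boundary complement: a pushout complement in which `c` is mono
and there are `d₁ : n → C`, `d₂ : m → C` commuting with the interface of `G` such
that the cospan `j + n → C ← m + i` is monogamous. -/
def IsBoundaryComplement {S : MonSig} {i j n m : Type} (L : LCospan S i j) (Gc : LCospan S n m)
    (f : LHom L.G Gc.G) (C : LHyp S) (c : i ⊕ j → C.V) (g : LHom C Gc.G) : Prop :=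
  IsPushoutComplement L Gc f C c g ∧ Function.Injective c ∧
  ∃ (d₁ : n → C.V) (d₂ : m → C.V),
    (∀ x, g.nodeMap (d₁ x) = Gc.inp x) ∧ (∀ y, g.nodeMap (d₂ y) = Gc.out y) ∧
    (LCospan.mk C (Sum.elim (fun y : j => c (Sum.inr y)) d₁)
                  (Sum.elim d₂ (fun x : i => c (Sum.inl x)))).Monogamous

/-- A convex DPO rewriting step from `D ← n+m` to `E ← n+m` using the rule
`L ← i+j → R`: a mono matching `f : L → D` with convex image, and a boundary
(pushout) complement `C` such that pasting `R` back along `i+j` yields `E`,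
with all interfaces preserved. -/
def ConvexStep {S : MonSig} {i j n m : Type} (Lr Rr : LCospan S i j)
    (D E : LCospan S n m) : Prop :=
  ∃ (f : LHom Lr.G D.G) (C : LHyp S) (c : i ⊕ j → C.V) (q : n ⊕ m → C.V)
    (g : LHom C D.G) (r : LHom Rr.G E.G) (h : LHom C E.G),
    Function.Injective f.nodeMap ∧ Function.Injective f.edgeMap ∧
    f.toHypHom.image.Convex ∧
    IsPushout (discreteHom Lr.G (Sum.elim Lr.inp Lr.out)) (discreteHom C c) f g ∧
    IsPushout (discreteHom Rr.G (Sum.elim Rr.inp Rr.out)) (discreteHom C c) r h ∧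
    (∀ x, g.nodeMap (q (Sum.inl x)) = D.inp x) ∧
    (∀ y, g.nodeMap (q (Sum.inr y)) = D.out y) ∧
    (∀ x, h.nodeMap (q (Sum.inl x)) = E.inp x) ∧
    (∀ y, h.nodeMap (q (Sum.inr y)) = E.out y) ∧
    Function.Injective c ∧
    (LCospan.mk C (Sum.elim (fun y : j => c (Sum.inr y)) (fun x : n => q (Sum.inl x)))
                  (Sum.elim (fun y : m => q (Sum.inr y)) (fun x : i => c (Sum.inl x)))).Monogamous

/-! ### Σ-terms, the SMC congruence, and the interpretation into cospans -/

/-- Terms over a monoidal signature, generated by the operations, identities,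
symmetries, sequential composition and monoidal product. -/
inductive Term (S : MonSig) : ℕ → ℕ → Type where
  | op (o : S.ops) : Term S (S.ar o) (S.coar o)
  | id (n : ℕ) : Term S n n
  | symm (m n : ℕ) : Term S (m + n) (n + m)
  | seq {m n p : ℕ} : Term S m n → Term S n p → Term S m p
  | par {m₁ n₁ m₂ n₂ : ℕ} : Term S m₁ n₁ → Term S m₂ n₂ → Term S (m₁ + m₂) (n₁ + n₂)

/-- Transport of a term along equalities of its (co)arities. -/
def castTerm {S : MonSig} {m m' n n' : ℕ} (h₁ : m = m') (h₂ : n = n')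
    (t : Term S m n) : Term S m' n' := h₁ ▸ h₂ ▸ t

/-- The congruence on terms generated by the laws of symmetric strict monoidal
categories. -/
inductive SMC (S : MonSig) : {m n : ℕ} → Term S m n → Term S m n → Prop where
  | refl {m n} (t : Term S m n) : SMC S t t
  | symm' {m n} {t u : Term S m n} : SMC S t u → SMC S u t
  | trans {m n} {t u v : Term S m n} : SMC S t u → SMC S u v → SMC S t v
  | seq_congr {m n p} {t t' : Term S m n} {u u' : Term S n p} :
      SMC S t t' → SMC S u u' → SMC S (t.seq u) (t'.seq u')
  | par_congr {m₁ n₁ m₂ n₂} {t t' : Term S m₁ n₁} {u u' : Term S m₂ n₂} :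
      SMC S t t' → SMC S u u' → SMC S (t.par u) (t'.par u')
  | seq_assoc {m n p q} (t : Term S m n) (u : Term S n p) (v : Term S p q) :
      SMC S ((t.seq u).seq v) (t.seq (u.seq v))
  | id_seq {m n} (t : Term S m n) : SMC S ((Term.id m).seq t) t
  | seq_id {m n} (t : Term S m n) : SMC S (t.seq (Term.id n)) t
  | par_assoc {m₁ n₁ m₂ n₂ m₃ n₃} (t : Term S m₁ n₁) (u : Term S m₂ n₂) (v : Term S m₃ n₃) :
      SMC S (castTerm (Nat.add_assoc m₁ m₂ m₃) (Nat.add_assoc n₁ n₂ n₃) ((t.par u).par v))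
            (t.par (u.par v))
  | id_zero_par {m n} (t : Term S m n) :
      SMC S (castTerm (Nat.zero_add m) (Nat.zero_add n) ((Term.id 0).par t)) t
  | par_id_zero {m n} (t : Term S m n) : SMC S (t.par (Term.id 0)) t
  | interchange {m₁ n₁ p₁ m₂ n₂ p₂} (s : Term S m₁ n₁) (u : Term S n₁ p₁)
      (t : Term S m₂ n₂) (v : Term S n₂ p₂) :
      SMC S ((s.seq u).par (t.seq v)) ((s.par t).seq (u.par v))
  | id_par_id (m n : ℕ) : SMC S ((Term.id m).par (Term.id n)) (Term.id (m + n))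
  | symm_symm (m n : ℕ) : SMC S ((Term.symm m n).seq (Term.symm n m)) (Term.id (m + n))
  | symm_hexagon (m n o : ℕ) :
      SMC S ((castTerm rfl (Nat.add_assoc n m o) ((Term.symm m n).par (Term.id o))).seq
              ((Term.id n).par (Term.symm m o)))
            (castTerm (Nat.add_assoc m n o).symm (Nat.add_assoc n o m) (Term.symm m (n + o)))
  | symm_nat {o n : ℕ} (s : Term S o n) (m : ℕ) :
      SMC S ((s.par (Term.id m)).seq (Term.symm n m)) ((Term.symm o m).seq ((Term.id m).par s))

/-- The cospan interpreting a generator `o : k → l`: the carrier has `k + l`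
nodes and a single `o`-labelled hyperedge whose ordered sources are the interface
inputs and whose ordered targets are the interface outputs. -/
def genCospan {S : MonSig} (o : S.ops) : LCospan S (Fin (S.ar o)) (Fin (S.coar o)) where
  G := { V := Fin (S.ar o) ⊕ Fin (S.coar o)
         E := Unit
         src := fun _ => (List.finRange (S.ar o)).map Sum.inl
         tgt := fun _ => (List.finRange (S.coar o)).map Sum.inr
         label := fun _ => o
         src_len := by intro e; simp
         tgt_len := by intro e; simp }
  inp := Sum.inl
  out := Sum.inr

/-- The cospan interpreting `id_k`: discrete carrier with identity legs. -/
def idLCospan (S : MonSig) (k : ℕ) : LCospan S (Fin k) (Fin k) :=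
  ⟨discreteLHyp S (Fin k), id, id⟩

/-- The cospan interpreting the symmetry `σ_{m,n}`: discrete carrier on `m + n`
nodes, identity input leg, and the swap permutation as output leg. -/
def symmLCospan (S : MonSig) (m n : ℕ) : LCospan S (Fin (m + n)) (Fin (n + m)) :=
  ⟨discreteLHyp S (Fin (m + n)), id, fun x => finAddFlip x⟩

/-- The interpretation of terms as cospans of labelled hypergraphs with discrete
interfaces. -/
def interp {S : MonSig} : {m n : ℕ} → Term S m n → LCospan S (Fin m) (Fin n)
  | _, _, .op o => genCospan o
  | _, _, .id k => idLCospan S k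
  | _, _, .symm m n => symmLCospan S m n
  | _, _, .seq t u => (interp t).comp (interp u)
  | _, _, .par t u =>
      ((interp t).tensor (interp u)).reind (finSumFinEquiv.symm) (finSumFinEquiv.symm)

/-- A rewriting system on `Σ`-terms: a set of pairs of terms with equal arities
and coarities. -/
abbrev TermRules (S : MonSig) := Set (Σ i j : ℕ, Term S i j × Term S i j)

/-- Syntactic rewriting modulo the SMC laws: `d ⇒_R e` iff, modulo the SMC
congruence, `d = c₁ ; (id_k ⊕ l) ; c₂` and `e = c₁ ; (id_k ⊕ r) ; c₂` for some
rule `(l, r)` in `R`. -/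
def SynStep {S : MonSig} (R : TermRules S) {n m : ℕ} (d e : Term S n m) : Prop :=
  ∃ (i j : ℕ) (l r : Term S i j), (⟨i, j, (l, r)⟩ ∈ R) ∧
    ∃ (k : ℕ) (c₁ : Term S n (k + i)) (c₂ : Term S (k + j) m),
      SMC S d (c₁.seq (((Term.id k).par l).seq c₂)) ∧
      SMC S e (c₁.seq (((Term.id k).par r).seq c₂))

section

variable {S : MonSig}

/-- Terms of arbitrary type are related if their types agree and they are equal modulo
the laws of symmetric strict monoidal categories. -/
def HSMC (S : MonSig) (a b : Σ m n : ℕ, Term S m n) : Prop :=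
  ∃ (h₁ : a.1 = b.1) (h₂ : a.2.1 = b.2.1), SMC S (castTerm h₁ h₂ a.2.2) b.2.2

theorem HSMC.equivalence (S : MonSig) : Equivalence (HSMC S) where
  refl a := ⟨rfl, rfl, SMC.refl _⟩
  symm := by
    rintro ⟨m, n, t⟩ ⟨m', n', t'⟩ ⟨h₁, h₂, h⟩
    dsimp only at h₁ h₂
    subst h₁ h₂
    exact ⟨rfl, rfl, h.symm'⟩
  trans := by
    rintro ⟨m, n, t⟩ ⟨m', n', t'⟩ ⟨m'', n'', t''⟩ ⟨h₁, h₂, h⟩ ⟨h₃, h₄, h'⟩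
    dsimp only at h₁ h₂ h₃ h₄
    subst h₁ h₂ h₃ h₄
    exact ⟨rfl, rfl, h.trans h'⟩

instance termSetoid (S : MonSig) : Setoid (Σ m n : ℕ, Term S m n) :=
  ⟨HSMC S, HSMC.equivalence S⟩

/-- Morphisms of the free symmetric strict monoidal category on `S`, with the
domain and the codomain as data. -/
def Mor (S : MonSig) : Type := Quotient (termSetoid S)

namespace Mor

/-- The morphism represented by a term. -/
def mk {m n : ℕ} (t : Term S m n) : Mor S := Quotient.mk (termSetoid S) ⟨m, n, t⟩

theorem mk_eq_mk {m n : ℕ} {t u : Term S m n} : mk t = mk u ↔ SMC S t u := by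
  constructor
  · intro h
    obtain ⟨_, _, h⟩ : HSMC S ⟨m, n, t⟩ ⟨m, n, u⟩ := Quotient.exact h
    exact h
  · intro h
    exact Quotient.sound ⟨rfl, rfl, h⟩

theorem mk_cast {m n m' n' : ℕ} (h₁ : m = m') (h₂ : n = n') (t : Term S m n) :
    mk (castTerm h₁ h₂ t) = mk t := by
  subst h₁ h₂
  rfl

theorem exists_rep (x : Mor S) : ∃ (m n : ℕ) (t : Term S m n), x = mk t := by
  obtain ⟨⟨m, n, t⟩, rfl⟩ := Quotient.exists_rep x
  exact ⟨m, n, t, rfl⟩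

/-- The domain of a morphism. -/
def dom (x : Mor S) : ℕ := Quotient.lift (fun a => a.1) (fun _ _ (h : HSMC S _ _) => h.1) x

/-- The codomain of a morphism. -/
def cod (x : Mor S) : ℕ := Quotient.lift (fun a => a.2.1) (fun _ _ (h : HSMC S _ _) => h.2.1) x

@[simp] theorem dom_mk {m n : ℕ} (t : Term S m n) : dom (mk t) = m := rfl

@[simp] theorem cod_mk {m n : ℕ} (t : Term S m n) : cod (mk t) = n := rfl

/-- The monoidal product of morphisms. -/
def par (x y : Mor S) : Mor S :=
  Quotient.lift₂ (fun a b => mk (a.2.2.par b.2.2)) (by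
    rintro ⟨m₁, n₁, t₁⟩ ⟨m₂, n₂, t₂⟩ ⟨m₁', n₁', t₁'⟩ ⟨m₂', n₂', t₂'⟩ ⟨h₁, h₂, h⟩ ⟨h₃, h₄, h'⟩
    dsimp only at h₁ h₂ h₃ h₄
    subst h₁ h₂ h₃ h₄
    exact mk_eq_mk.2 (SMC.par_congr h h')) x y

instance : Mul (Mor S) := ⟨par⟩

theorem mk_mul {m₁ n₁ m₂ n₂ : ℕ} (t : Term S m₁ n₁) (u : Term S m₂ n₂) :
    mk t * mk u = mk (t.par u) := rfl

/-- Sequential composition of morphisms; it returns its first argument if the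
morphisms are not composable. -/
def seq (x y : Mor S) : Mor S :=
  Quotient.lift₂ (fun a b => if h : a.2.1 = b.1 then
      mk ((castTerm rfl h a.2.2).seq b.2.2) else mk a.2.2) (by
    rintro ⟨m₁, n₁, t₁⟩ ⟨m₂, n₂, t₂⟩ ⟨m₁', n₁', t₁'⟩ ⟨m₂', n₂', t₂'⟩ ⟨h₁, h₂, h⟩ ⟨h₃, h₄, h'⟩
    dsimp only at h₁ h₂ h₃ h₄
    subst h₁ h₂ h₃ h₄
    dsimp only
    split_ifs with hc
    · subst hc
      exact mk_eq_mk.2 (SMC.seq_congr h h')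
    · exact mk_eq_mk.2 h) x y

theorem mk_seq {m n p : ℕ} (t : Term S m n) (u : Term S n p) :
    (mk t).seq (mk u) = mk (t.seq u) := by
  change (if h : n = n then mk ((castTerm rfl h t).seq u) else mk t) = _
  rw [dif_pos rfl]
  rfl

/-- The identity morphism. -/
def iden (S : MonSig) (n : ℕ) : Mor S := mk (Term.id n)

/-- The symmetry. -/
def swap (S : MonSig) (m n : ℕ) : Mor S := mk (Term.symm m n)

/-- The morphism given by an operation. -/
def op (o : S.ops) : Mor S := mk (Term.op o)

@[simp] theorem dom_iden (n : ℕ) : (iden S n).dom = n := rfl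
@[simp] theorem cod_iden (n : ℕ) : (iden S n).cod = n := rfl
@[simp] theorem dom_swap (m n : ℕ) : (swap S m n).dom = m + n := rfl
@[simp] theorem cod_swap (m n : ℕ) : (swap S m n).cod = n + m := rfl
@[simp] theorem dom_op (o : S.ops) : (op o).dom = S.ar o := rfl
@[simp] theorem cod_op (o : S.ops) : (op o).cod = S.coar o := rfl

@[simp] theorem dom_mul (x y : Mor S) : (x * y).dom = x.dom + y.dom := by
  obtain ⟨m, n, t, rfl⟩ := exists_rep x
  obtain ⟨m', n', u, rfl⟩ := exists_rep y
  rfl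

@[simp] theorem cod_mul (x y : Mor S) : (x * y).cod = x.cod + y.cod := by
  obtain ⟨m, n, t, rfl⟩ := exists_rep x
  obtain ⟨m', n', u, rfl⟩ := exists_rep y
  rfl

/-- Composable morphisms are represented by composable terms. -/
theorem exists_rep₂ {x y : Mor S} (h : x.cod = y.dom) :
    ∃ (m n p : ℕ) (t : Term S m n) (u : Term S n p), x = mk t ∧ y = mk u := by
  obtain ⟨m, n, t, rfl⟩ := exists_rep x
  obtain ⟨n', p, u, rfl⟩ := exists_rep y
  obtain rfl : n = n' := h
  exact ⟨m, n, p, t, u, rfl, rfl⟩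

@[simp] theorem dom_seq (x y : Mor S) : (x.seq y).dom = x.dom := by
  by_cases h : x.cod = y.dom
  · obtain ⟨m, n, p, t, u, rfl, rfl⟩ := exists_rep₂ h
    rw [mk_seq]
    rfl
  · obtain ⟨m, n, t, rfl⟩ := exists_rep x
    obtain ⟨n', p, u, rfl⟩ := exists_rep y
    change dom (if h : n = n' then _ else mk t) = _
    rw [dif_neg (show ¬ n = n' from h)]

@[simp] theorem cod_seq {x y : Mor S} (h : x.cod = y.dom) : (x.seq y).cod = y.cod := by
  obtain ⟨m, n, p, t, u, rfl, rfl⟩ := exists_rep₂ h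
  rw [mk_seq]
  rfl

theorem seq_seq {x y z : Mor S} (h : x.cod = y.dom) (h' : y.cod = z.dom) :
    (x.seq y).seq z = x.seq (y.seq z) := by
  obtain ⟨m, n, p, t, u, rfl, rfl⟩ := exists_rep₂ h
  obtain ⟨p', q, v, rfl⟩ := exists_rep z
  obtain rfl : p = p' := h'
  simp only [mk_seq]
  exact mk_eq_mk.2 (SMC.seq_assoc t u v)

theorem iden_seq {n : ℕ} {x : Mor S} (h : n = x.dom) : (iden S n).seq x = x := by
  obtain ⟨m, p, t, rfl⟩ := exists_rep x
  obtain rfl : n = m := h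
  simp only [iden, mk_seq]
  exact mk_eq_mk.2 (SMC.id_seq t)

theorem seq_iden {n : ℕ} {x : Mor S} (h : x.cod = n) : x.seq (iden S n) = x := by
  obtain ⟨m, p, t, rfl⟩ := exists_rep x
  obtain rfl : p = n := h
  simp only [iden, mk_seq]
  exact mk_eq_mk.2 (SMC.seq_id t)

instance : Monoid (Mor S) where
  mul_assoc x y z := by
    obtain ⟨_, _, t, rfl⟩ := exists_rep x
    obtain ⟨_, _, u, rfl⟩ := exists_rep y
    obtain ⟨_, _, v, rfl⟩ := exists_rep z
    simp only [mk_mul]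
    rw [← mk_eq_mk.2 (SMC.par_assoc t u v), mk_cast]
  one := iden S 0
  one_mul x := by
    obtain ⟨_, _, t, rfl⟩ := exists_rep x
    change mk _ * mk t = _
    rw [mk_mul, ← mk_cast (Nat.zero_add _) (Nat.zero_add _)]
    exact mk_eq_mk.2 (SMC.id_zero_par t)
  mul_one x := by
    obtain ⟨_, _, t, rfl⟩ := exists_rep x
    change mk t * mk _ = _
    rw [mk_mul]
    exact mk_eq_mk.2 (SMC.par_id_zero t)

@[simp] theorem iden_zero : iden S 0 = 1 := rfl
@[simp] theorem dom_one : (1 : Mor S).dom = 0 := rfl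
@[simp] theorem cod_one : (1 : Mor S).cod = 0 := rfl

theorem seq_mul_seq {s u t v : Mor S} (h : s.cod = u.dom) (h' : t.cod = v.dom) :
    s.seq u * t.seq v = (s * t).seq (u * v) := by
  obtain ⟨_, _, _, s, u, rfl, rfl⟩ := exists_rep₂ h
  obtain ⟨_, _, _, t, v, rfl, rfl⟩ := exists_rep₂ h'
  simp only [mk_seq, mk_mul]
  exact mk_eq_mk.2 (SMC.interchange s u t v)

theorem iden_mul_iden (m n : ℕ) : iden S m * iden S n = iden S (m + n) :=
  mk_eq_mk.2 (SMC.id_par_id m n)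

theorem swap_seq_swap (m n : ℕ) : (swap S m n).seq (swap S n m) = iden S (m + n) := by
  simp only [swap, mk_seq]
  exact mk_eq_mk.2 (SMC.symm_symm m n)

theorem swap_add_right (m n o : ℕ) : swap S m (n + o) =
    (swap S m n * iden S o).seq (iden S n * swap S m o) := by
  have h := mk_eq_mk.2 (SMC.symm_hexagon (S := S) m n o)
  rw [mk_cast, ← mk_seq, mk_cast] at h
  exact h.symm

theorem mul_iden_seq_swap (x : Mor S) (m : ℕ) :
    (x * iden S m).seq (swap S x.cod m) = (swap S x.dom m).seq (iden S m * x) := by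
  obtain ⟨_, _, t, rfl⟩ := exists_rep x
  simp only [iden, swap, mk_mul, cod_mk, dom_mk, mk_seq]
  exact mk_eq_mk.2 (SMC.symm_nat t m)

end Mor

end

section

variable {S : MonSig}
namespace Mor

theorem eq_of_inverse {x y z : Mor S} (h : x.seq z = iden S x.dom) (h' : z.seq y = iden S y.dom)
    (hx : x.cod = z.dom) (hy : z.cod = y.dom) (hxy : x.cod = y.dom) : x = y := by
  rw [← seq_iden (x := x) hxy, ← h', ← seq_seq hx hy, h, iden_seq]
  rw [← dom_seq z y, h', dom_iden] at hx
  have := congrArg cod h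
  rw [cod_seq (by rw [hx, ← dom_seq z y, h', dom_iden]), cod_iden] at this
  rw [← this, hy]

theorem swap_zero_right (m : ℕ) : swap S m 0 = iden S m := by
  have h := swap_add_right (S := S) m 0 0
  have h' := swap_seq_swap (S := S) m 0
  simp only [iden_zero, mul_one, one_mul, add_zero] at h h'
  rw [← h']
  nth_rw 2 [h]
  rw [seq_seq (by simp) (by simp), h', seq_iden (by simp)]

theorem mul_iden_seq {x y : Mor S} (h : x.cod = y.dom) (n : ℕ) :
    x.seq y * iden S n = (x * iden S n).seq (y * iden S n) := by
  rw [← seq_mul_seq h (by simp), iden_seq (by simp)]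

theorem iden_mul_seq {x y : Mor S} (h : x.cod = y.dom) (n : ℕ) :
    iden S n * x.seq y = (iden S n * x).seq (iden S n * y) := by
  rw [← seq_mul_seq (by simp) h, iden_seq (by simp)]

theorem mul_eq_seq_left {x y : Mor S} {m n : ℕ} (hm : x.cod = m) (hn : y.dom = n) :
    x * y = (x * iden S n).seq (iden S m * y) := by
  rw [← seq_mul_seq (by simp [hm]) (by simp [hn]), iden_seq (by simp [hn]), seq_iden (by simp [hm])]

theorem mul_eq_seq_right {x y : Mor S} {m n : ℕ} (hm : x.dom = m) (hn : y.cod = n) :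
    x * y = (iden S m * y).seq (x * iden S n) := by
  rw [← seq_mul_seq (by simp [hm]) (by simp [hn]), iden_seq (by simp [hm]), seq_iden (by simp [hn])]

theorem swap_add_left (m n o : ℕ) : swap S (m + n) o =
    (iden S m * swap S n o).seq (swap S m o * iden S n) := by
  apply eq_of_inverse (z := swap S o (m + n))
  · simp [swap_seq_swap]
  · rw [swap_add_right, seq_seq (by simp [add_assoc]) (by simp),
      ← seq_seq (x := iden S m * _) (by simp) (by simp [add_assoc]), ← iden_mul_seq (by simp),
      swap_seq_swap, iden_mul_iden, iden_seq (by simp [add_assoc]), ← mul_iden_seq (by simp),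
      swap_seq_swap, iden_mul_iden]
    simp [add_comm, add_left_comm]
  · simp
  · simp [add_assoc]
  · simp [add_comm, add_left_comm]

theorem swap_seq_mul_iden {x : Mor S} {k l : ℕ} (hk : x.dom = k) (hl : x.cod = l) (m : ℕ) :
    (swap S m k).seq (x * iden S m) = (iden S m * x).seq (swap S m l) := by
  subst hk hl
  have h := congrArg (fun z => ((swap S m x.dom).seq z).seq (swap S m x.cod)) (mul_iden_seq_swap x m)
  rw [seq_seq (by simp) (by rw [cod_seq (by simp)]; simp), seq_seq (by simp) (by simp), swap_seq_swap,
    seq_iden (by simp [add_comm]), ← seq_seq (by simp) (by simp), swap_seq_swap, iden_seq (by simp)] at h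
  exact h

theorem mul_iden_seq_swap' {x : Mor S} {k l : ℕ} (hk : x.dom = k) (hl : x.cod = l) (m : ℕ) :
    (x * iden S m).seq (swap S l m) = (swap S k m).seq (iden S m * x) := by
  subst hk hl
  exact mul_iden_seq_swap x m

/-- The morphism moving the first of `1 + a + b` wires past the next `a` wires. -/
def bring (S : MonSig) (a b : ℕ) : Mor S := swap S 1 a * iden S b

@[simp] theorem dom_bring (a b : ℕ) : (bring S a b).dom = 1 + a + b := rfl
@[simp] theorem cod_bring (a b : ℕ) : (bring S a b).cod = a + 1 + b := rfl

theorem bring_mul_iden (a b c : ℕ) : bring S a b * iden S c = bring S a (b + c) := by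
  rw [bring, mul_assoc, iden_mul_iden, bring]

theorem bring_add (a b c : ℕ) : bring S (a + b) c =
    (bring S a (b + c)).seq (iden S a * bring S b c) := by
  rw [bring, swap_add_right, mul_iden_seq (by simp; omega), mul_assoc, iden_mul_iden, mul_assoc]
  rfl

theorem bring_seq_swap_left (a b c : ℕ) : (bring S a (b + c)).seq (swap S (a + 1 + b) c) =
    (iden S 1 * swap S (a + b) c).seq (bring S (c + a) b) := by
  rw [← bring_mul_iden, mul_iden_seq_swap' (k := 1 + (a + b)) (by simp; omega) (by simp),
    swap_add_left, bring_add, seq_seq (by simp; omega) (by simp; omega)]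
  rfl

theorem bring_seq_swap_right (a b c : ℕ) : (bring S (a + b) c).seq (swap S a (b + 1 + c)) =
    (iden S 1 * swap S a (b + c)).seq (bring S b (c + a)) := by
  have h : iden S 1 * swap S a (b + c) = (bring S a (b + c)).seq (swap S a (1 + (b + c))) := by
    rw [swap_add_right a 1 (b + c), ← seq_seq (by simp) (by simp; omega), bring,
      ← mul_iden_seq (by simp), swap_seq_swap, iden_mul_iden, iden_seq (by simp; omega)]
  rw [h, ← bring_mul_iden b c a, seq_seq (by simp; omega) (by simp; omega),
    swap_seq_mul_iden (l := b + 1 + c) (by simp; omega) (by simp), bring_add,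
    seq_seq (by simp; omega) (by simp)]

end Mor
open Mor

/-- A labelled hypergraph `G` gives meaning to morphisms as transformations of lists of
nodes: `Runs G w x A w'` says that `x` turns `w` into `w'` by using the hyperedges in `A`. -/
inductive Runs (G : LHyp S) : List G.V → Mor S → Multiset G.E → List G.V → Prop
  | op (e : G.E) : Runs G (G.src e) (op (G.label e)) {e} (G.tgt e)
  | id (w : List G.V) : Runs G w (iden S w.length) 0 w
  | swap (a b : List G.V) : Runs G (a ++ b) (swap S a.length b.length) 0 (b ++ a)
  | seq {w x A v y B w'} : Runs G w x A v → Runs G v y B w' → Runs G w (x.seq y) (A + B) w'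
  | par {w x A w' v y B v'} : Runs G w x A w' → Runs G v y B v' →
      Runs G (w ++ v) (x * y) (A + B) (w' ++ v')

namespace Runs
variable {G : LHyp S}

theorem dom_cod {w x A w'} (h : Runs G w x A w') : x.dom = w.length ∧ x.cod = w'.length := by
  induction h with
  | op e => simp [G.src_len, G.tgt_len]
  | id w => simp
  | swap a b => simp
  | seq _ _ ih ih' => simp [ih, ih']
  | par _ _ ih ih' => simp [ih, ih']

theorem dom {w x A w'} (h : Runs G w x A w') : x.dom = w.length := h.dom_cod.1
theorem cod {w x A w'} (h : Runs G w x A w') : x.cod = w'.length := h.dom_cod.2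

theorem conservation {w x A w'} (h : Runs G w x A w') :
    (w : Multiset G.V) + A.bind (fun e => (G.tgt e : Multiset G.V)) =
      A.bind (fun e => (G.src e : Multiset G.V)) + (w' : Multiset G.V) := by
  induction h with
  | op e => simp
  | id w => simp
  | swap a b => simp [← Multiset.coe_add, add_comm]
  | @seq w x A v y B w' _ _ ih ih' =>
    rw [Multiset.add_bind, Multiset.add_bind, ← add_assoc, ih, add_assoc, ih', add_assoc]
  | @par w x A w' v y B v' _ _ ih ih' =>
    rw [Multiset.add_bind, Multiset.add_bind, ← Multiset.coe_add, ← Multiset.coe_add,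
      add_add_add_comm, ih, ih', add_add_add_comm]

theorem perm {w x w'} (h : Runs G w x 0 w') : w.Perm w' := by
  simpa using h.conservation

theorem exists_of_perm {w w' : List G.V} (h : w.Perm w') : ∃ x, Runs G w x 0 w' := by
  induction h with
  | nil => exact ⟨_, .id _⟩
  | @cons v a b _ ih =>
    obtain ⟨x, hx⟩ := ih
    exact ⟨_, by simpa using (Runs.id [v]).par hx⟩
  | swap a b l => exact ⟨_, by simpa using (Runs.swap [b] [a]).par (.id l)⟩
  | trans _ _ ih ih' =>
    obtain ⟨x, hx⟩ := ih
    obtain ⟨y, hy⟩ := ih'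
    exact ⟨_, by simpa using hx.seq hy⟩

theorem bring (a : List G.V) (v : G.V) (b : List G.V) :
    Runs G (v :: (a ++ b)) (Mor.bring S a.length b.length) 0 (a ++ v :: b) := by
  simpa [Mor.bring] using (Runs.swap [v] a).par (.id b)

theorem extract_wire {w x A w'} (h : Runs G w x A w') (hA : A = 0) (a : List G.V) (v : G.V)
    (b : List G.V) (hw : w = a ++ v :: b) :
    ∃ a' b' x', w' = a' ++ v :: b' ∧ Runs G (a ++ b) x' 0 (a' ++ b') ∧
      (Mor.bring S a.length b.length).seq x =
        (iden S 1 * x').seq (Mor.bring S a'.length b'.length) := by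
  induction h generalizing a b with
  | op e => simp at hA
  | id w =>
    subst hw
    refine ⟨a, b, _, rfl, .id _, ?_⟩
    rw [seq_iden (by simp; omega), iden_mul_iden, iden_seq (by simp; omega)]
  | swap w₁ w₂ =>
    rcases List.append_eq_append_iff.1 hw with ⟨c, rfl, rfl⟩ | ⟨c, rfl, hc⟩
    · refine ⟨c, b ++ w₁, Mor.swap S w₁.length (c ++ b).length, by simp, ?_, ?_⟩
      · simpa using Runs.swap w₁ (c ++ b)
      · have := bring_seq_swap_right (S := S) w₁.length c.length b.length
        simpa [add_assoc, add_comm, add_left_comm] using this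
    · rcases c with _ | ⟨v', c⟩
      · obtain rfl : w₂ = v :: b := by simpa using hc.symm
        refine ⟨[], b ++ a, Mor.swap S a.length b.length, by simp, ?_, ?_⟩
        · simpa using Runs.swap a b
        · have := bring_seq_swap_right (S := S) a.length 0 b.length
          simpa [add_assoc, add_comm, add_left_comm] using this
      · obtain ⟨rfl, rfl⟩ : v = v' ∧ b = c ++ w₂ := by simpa using hc
        refine ⟨w₂ ++ a, c, Mor.swap S (a ++ c).length w₂.length, by simp, ?_, ?_⟩
        · simpa using Runs.swap (a ++ c) w₂
        · have := bring_seq_swap_left (S := S) a.length c.length w₂.length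
          simpa [add_assoc, add_comm, add_left_comm] using this
  | @seq w x A u y B w' hx hy ih ih' =>
    obtain ⟨rfl, rfl⟩ := add_eq_zero.1 hA
    obtain ⟨a', b', x', rfl, hx', e⟩ := ih rfl a b hw
    obtain ⟨a'', b'', y', rfl, hy', e'⟩ := ih' rfl a' b' rfl
    subst hw
    have h₁ := hx.dom
    have h₂ := hx.cod
    have h₃ := hy.dom
    have h₄ := hx'.dom
    have h₅ := hx'.cod
    have h₆ := hy'.dom
    have h₇ := hy'.cod
    simp only [List.length_append, List.length_cons] at h₁ h₂ h₃ h₄ h₅ h₆ h₇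
    refine ⟨a'', b'', x'.seq y', rfl, by simpa using hx'.seq hy', ?_⟩
    rw [← seq_seq (by simp; omega) (by omega), e,
      seq_seq (by simp; omega) (by simp; omega), e', ← seq_seq (by simp; omega) (by simp; omega),
      iden_mul_seq (by omega)]
  | @par w₁ x A w₁' w₂ y B w₂' hx hy ih ih' =>
    obtain ⟨rfl, rfl⟩ := add_eq_zero.1 hA
    have key : ∀ c, w₁ = a ++ v :: c → b = c ++ w₂ → ∃ a' b' x', w₁' ++ w₂' = a' ++ v :: b' ∧
        Runs G (a ++ b) x' 0 (a' ++ b') ∧ (Mor.bring S a.length b.length).seq (x * y) =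
        (iden S 1 * x').seq (Mor.bring S a'.length b'.length) := by
      rintro c rfl rfl
      obtain ⟨a', b', x', rfl, hx', e⟩ := ih rfl a c rfl
      have h₁ := hx.dom
      have h₃ := hy.dom
      have h₂ := hy.cod
      have h₄ := hx'.cod
      simp only [List.length_append, List.length_cons] at h₁ h₂ h₃ h₄
      refine ⟨a', b' ++ w₂', x' * y, by simp, by simpa using hx'.par hy, ?_⟩
      rw [List.length_append, ← bring_mul_iden, ← seq_mul_seq (by simp; omega) (by simp [h₃]), e,
        iden_seq h₃.symm, List.length_append, ← bring_mul_iden, ← mul_assoc, ← seq_mul_seq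
        (by simp; omega) (by simp [h₂]), seq_iden h₂]
    have key' : ∀ c, w₂ = c ++ v :: b → a = w₁ ++ c → ∃ a' b' x', w₁' ++ w₂' = a' ++ v :: b' ∧
        Runs G (a ++ b) x' 0 (a' ++ b') ∧ (Mor.bring S a.length b.length).seq (x * y) =
        (iden S 1 * x').seq (Mor.bring S a'.length b'.length) := by
      rintro c rfl rfl
      obtain ⟨a', b', y', rfl, hy', e⟩ := ih' rfl c b rfl
      have h₁ := hx.dom
      have h₂ := hx.cod
      have h₃ := hy.dom
      have h₄ := hy'.dom
      have h₅ := hy'.cod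
      simp only [List.length_append, List.length_cons] at h₁ h₂ h₃ h₄ h₅
      refine ⟨w₁' ++ a', b', x * y', by simp, by simpa using hx.par hy', ?_⟩
      have step : (Mor.bring S w₁.length (c.length + b.length)).seq (x * (iden S 1 * y')) =
          (iden S 1 * (x * y')).seq (Mor.bring S w₁'.length (a'.length + b'.length)) := by
        rw [Mor.bring, ← mul_assoc, ← seq_mul_seq (by simp; omega) (by simp [h₄]),
          swap_seq_mul_iden h₁ h₂, iden_seq (by simp [h₄]), ← mul_assoc, Mor.bring,
          ← seq_mul_seq (by simp [h₂]) (by simp [h₅]), seq_iden (by simp [h₅])]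
      have split : x * (iden S 1 * y').seq (Mor.bring S a'.length b'.length) =
          (x * (iden S 1 * y')).seq (iden S w₁'.length * Mor.bring S a'.length b'.length) := by
        rw [← seq_mul_seq (by simp [h₂]) (by simp; omega), seq_iden h₂]
      rw [List.length_append, bring_add, seq_seq (by simp; omega) (by simp; omega),
        ← seq_mul_seq (by simp [h₁]) (by simp; omega), e, iden_seq h₁.symm, split,
        ← seq_seq (by simp; omega) (by simp; omega), step, List.length_append, bring_add,
        seq_seq (by simp; omega) (by simp; omega)]
    rcases List.append_eq_append_iff.1 hw with ⟨c, h, h'⟩ | ⟨c, h, h'⟩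
    · exact key' c h' h
    · rcases c with _ | ⟨v', c⟩
      · exact key' [] (by simpa using h'.symm) (by simpa using h.symm)
      · obtain ⟨rfl, rfl⟩ : v = v' ∧ b = c ++ w₂ := by simpa using h'
        exact key c h rfl

theorem perm_unique {w x y w'} (hw : w.Nodup) (hx : Runs G w x 0 w') (hy : Runs G w y 0 w') :
    x = y := by
  induction w generalizing x y w' with
  | nil =>
    have key : ∀ {z : Mor S} {w A w'}, Runs G w z A w' → A = 0 → w = [] → z = 1 := by
      intro z w A w' h
      induction h with
      | op e => simp
      | id w => rintro - rfl; simp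
      | swap a b =>
        intro _ h
        obtain ⟨rfl, rfl⟩ := List.append_eq_nil_iff.1 h
        simp [swap_zero_right]
      | seq h _ ih ih' =>
        intro h₁ h₂
        obtain ⟨rfl, rfl⟩ := add_eq_zero.1 h₁
        subst h₂
        rw [ih rfl rfl, ih' rfl (List.nil_perm.1 h.perm), ← iden_zero, iden_seq (dom_iden 0).symm]
      | par _ _ ih ih' =>
        intro h₁ h₂
        obtain ⟨rfl, rfl⟩ := add_eq_zero.1 h₁
        obtain ⟨rfl, rfl⟩ := List.append_eq_nil_iff.1 h₂
        rw [ih rfl rfl, ih' rfl rfl, one_mul]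
    rw [key hx rfl rfl, key hy rfl rfl]
  | cons v w ih =>
    obtain ⟨a, b, x', rfl, hx', ex⟩ := hx.extract_wire rfl [] v w rfl
    obtain ⟨a', b', y', e, hy', ey⟩ := hy.extract_wire rfl [] v w rfl
    have hx₁ := hx.dom
    have hy₁ := hy.dom
    have hbring : Mor.bring S 0 w.length = iden S (1 + w.length) := by
      rw [Mor.bring, swap_zero_right, iden_mul_iden]
    have hn : (a ++ v :: b).Nodup := hx.perm.nodup_iff.1 hw
    have hv : v ∉ a := fun h => by
      have := (List.nodup_append.1 hn).2.2 v h v (by simp)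
      exact this rfl
    have hn' : (a' ++ v :: b').Nodup := e ▸ hn
    have hv' : v ∉ a' := fun h => by
      have := (List.nodup_append.1 hn').2.2 v h v (by simp)
      exact this rfl
    obtain ⟨rfl, rfl⟩ : a = a' ∧ b = b' := by
      rcases List.append_eq_append_iff.1 e with ⟨c, rfl, h⟩ | ⟨c, rfl, h⟩
      · rcases c with _ | ⟨u, c⟩
        · simpa using h
        · simp at h; simp [h.1] at hv'
      · rcases c with _ | ⟨u, c⟩
        · simpa [eq_comm] using h
        · simp at h; simp [h.1] at hv
    rw [List.length_nil, hbring, iden_seq (by rw [hx₁]; simp; omega)] at ex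
    rw [List.length_nil, hbring, iden_seq (by rw [hy₁]; simp; omega)] at ey
    rw [ex, ey, ih (List.nodup_cons.1 hw).2 hx' hy']

end Runs

end

section

variable {S : MonSig}
namespace Mor

theorem exchange {f g p q : Mor S} {a b c d n s m : ℕ} (fd : f.dom = a) (fc : f.cod = b)
    (gd : g.dom = c) (gc : g.cod = d) (pd : p.dom = n) (pc : p.cod = c + s)
    (qd : q.dom = b + s) (qc : q.cod = m) :
    (f * iden S n).seq ((iden S b * p).seq ((swap S b c * iden S s).seq ((iden S c * q).seq
      (g * iden S m)))) =
    (iden S a * p).seq ((swap S a c * iden S s).seq ((g * iden S (a + s)).seq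
      ((iden S d * (f * iden S s)).seq (iden S d * q)))) := by
  have e₁ : (iden S c * q).seq (g * iden S m) = (g * iden S (b + s)).seq (iden S d * q) := by
    rw [← mul_eq_seq_left gc qd, ← mul_eq_seq_right gd qc]
  have e₂ : (f * iden S n).seq (iden S b * p) = (iden S a * p).seq (f * iden S (c + s)) := by
    rw [← mul_eq_seq_left fc pd, ← mul_eq_seq_right fd pc]
  have e₃ : (f * iden S (c + s)).seq (swap S b c * iden S s) =
      (swap S a c * iden S s).seq (iden S c * (f * iden S s)) := by
    rw [← iden_mul_iden, ← mul_assoc, ← mul_iden_seq (by simp [fc]), mul_iden_seq_swap' fd fc,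
      mul_iden_seq (by simp; omega), mul_assoc]
  have e₄ : (iden S c * (f * iden S s)).seq (g * iden S (b + s)) =
      (g * iden S (a + s)).seq (iden S d * (f * iden S s)) := by
    rw [← mul_eq_seq_right (x := g) gd (by simp [fc]), ← mul_eq_seq_left gc (by simp [fd])]
  rw [e₁, ← seq_seq (by simp [pd, fc]) (by simp [pc]; omega), e₂,
    seq_seq (by simp [pc, fd]) (by simp [fc]; omega),
    ← seq_seq (y := swap S b c * _) (by simp [fc]; omega) (by simp [gd]; omega), e₃,
    seq_seq (by simp [fd]; omega) (by simp [fc, gd]),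
    ← seq_seq (y := g * _) (by simp [fc, gd]) (by simp [gc, qd]),
    e₄, seq_seq (by simp [gc, fd]) (by simp [fc, qd])]

end Mor
open Mor

/-- Runs of morphisms in which the operations are used one after the other. -/
inductive Lay (G : LHyp S) : List G.V → Mor S → Multiset G.E → List G.V → Prop
  | nil {w p w'} : Runs G w p 0 w' → Lay G w p 0 w'
  | cons {w p e r x A w'} : Runs G w p 0 (G.src e ++ r) → Lay G (G.tgt e ++ r) x A w' →
      Lay G w (p.seq ((op (G.label e) * iden S r.length).seq x)) (e ::ₘ A) w'

variable {G : LHyp S}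

theorem Runs.op_par (e : G.E) (r : List G.V) :
    Runs G (G.src e ++ r) (Mor.op (G.label e) * iden S r.length) {e} (G.tgt e ++ r) := by
  simpa using (Runs.op e).par (.id r)

theorem Runs.seq_seq {w x A v y B u z C t} (hx : Runs G w x A v) (hy : Runs G v y B u)
    (hz : Runs G u z C t) : (x.seq y).seq z = x.seq (y.seq z) :=
  Mor.seq_seq (hx.cod.trans hy.dom.symm) (hy.cod.trans hz.dom.symm)

namespace Lay

theorem runs {w x A w'} (h : Lay G w x A w') : Runs G w x A w' := by
  induction h with
  | nil h => exact h
  | cons hp _ ih => simpa using hp.seq ((Runs.op_par _ _).seq ih)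

theorem perm_seq {w p v x A w'} (hp : Runs G w p 0 v) (hx : Lay G v x A w') :
    Lay G w (p.seq x) A w' := by
  cases hx with
  | nil h => exact .nil (by simpa using hp.seq h)
  | @cons _ q e r x A w' hq hx =>
    have h₁ := hp.cod
    have h₂ := hq.dom
    have h₃ := hq.cod
    have h₄ := G.src_len e
    have h₅ := G.tgt_len e
    have h₆ := hx.runs.dom
    simp only [List.length_append] at h₃ h₆
    rw [← seq_seq (by omega) (by simp; omega)]
    exact .cons (by simpa using hp.seq hq) hx

theorem trans {w x A v y B w'} (hx : Lay G w x A v) (hy : Lay G v y B w') :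
    Lay G w (x.seq y) (A + B) w' := by
  induction hx with
  | nil h => simpa using perm_seq h hy
  | @cons w q e r x A w' hq hx ih =>
    have h₁ := hy.runs.dom
    have h₂ := hx.runs.cod
    have h₃ := hq.cod
    have h₄ := G.src_len e
    have h₅ := G.tgt_len e
    have h₆ := hx.runs.dom
    simp only [List.length_append] at h₃ h₆
    rw [Multiset.cons_add, seq_seq (by simp; omega) (by rw [cod_seq (by simp; omega)]; omega),
      seq_seq (by simp; omega) (by omega)]
    exact .cons hq (ih hy)

theorem mul_iden {w x A w'} (hx : Lay G w x A w') (v : List G.V) :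
    Lay G (w ++ v) (x * iden S v.length) A (w' ++ v) := by
  induction hx with
  | nil h => exact .nil (by simpa using h.par (.id v))
  | @cons w q e r x A w' hq hx ih =>
    have h₃ := hq.cod
    have h₄ := G.src_len e
    have h₅ := G.tgt_len e
    have h₆ := hx.runs.dom
    simp only [List.length_append] at h₃ h₆
    rw [mul_iden_seq (by simp; omega), mul_iden_seq (by simp; omega), mul_assoc, iden_mul_iden,
      ← List.length_append]
    exact .cons (by simpa using hq.par (.id v)) (by simpa using ih)

theorem iden_mul {w x A w'} (hx : Lay G w x A w') (v : List G.V) :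
    Lay G (v ++ w) (iden S v.length * x) A (v ++ w') := by
  have h := (perm_seq (Runs.swap v w) (hx.mul_iden v)).trans (.nil (Runs.swap w' v))
  rw [swap_seq_mul_iden hx.runs.dom hx.runs.cod, seq_seq (by simp [hx.runs.cod]) (by simp),
    swap_seq_swap, seq_iden (by simp [hx.runs.cod]), add_zero] at h
  exact h

end Lay

theorem Runs.lay {w x A w'} (h : Runs G w x A w') : Lay G w x A w' := by
  induction h with
  | op e =>
    have h := Lay.cons (e := e) (r := []) (by simpa using Runs.id (G.src e))
      (.nil (by simpa using Runs.id (G.tgt e)))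
    rw [iden_seq (by simp [G.src_len]), seq_iden (by simp [G.tgt_len])] at h
    simpa using h
  | id w => exact .nil (.id w)
  | swap a b => exact .nil (.swap a b)
  | seq _ _ ih ih' => exact ih.trans ih'
  | @par w x A w' v y B v' hx hy ih ih' =>
    rw [mul_eq_seq_left hx.cod hy.dom]
    exact (ih.mul_iden v).trans (ih'.iden_mul w')

theorem exists_perm_append {s r t r' : List G.V} (h : (t ++ r).Perm (s ++ r'))
    (hst : ∀ v ∈ s, v ∉ t) (hs : s.Nodup) : ∃ u, r.Perm (s ++ u) ∧ (t ++ u).Perm r' := by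
  classical
  have hsub : s.Subperm r := hs.subperm (fun v hv => by
    have := h.symm.subset (List.mem_append_left _ hv)
    exact (List.mem_append.1 this).resolve_left (hst v hv))
  obtain ⟨s', hs', hsl⟩ := hsub
  obtain ⟨u, hu⟩ := hsl.exists_perm_append
  replace hu : r.Perm (s ++ u) := hu.trans (hs'.append_right u)
  refine ⟨u, hu, ?_⟩
  have h₁ : (s ++ (t ++ u)).Perm (s ++ r') := by
    refine List.Perm.trans ?_ h
    refine List.Perm.trans ?_ (hu.symm.append_left t)
    rw [← List.append_assoc, ← List.append_assoc]
    exact List.perm_append_comm.append_right u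
  exact (List.perm_append_left_iff s).1 h₁

theorem Lay.extract {w x A w'} (h : Lay G w x A w')
    (hn : ((w : Multiset G.V) + A.bind (fun e => (G.tgt e : Multiset G.V))).Nodup)
    {e : G.E} (he : e ∈ A) (hmin : ∀ v ∈ G.src e, ∀ e' ∈ A, v ∉ G.tgt e') :
    ∃ r p x' B, A = e ::ₘ B ∧ Runs G w p 0 (G.src e ++ r) ∧ Runs G (G.tgt e ++ r) x' B w' ∧
      x = p.seq ((Mor.op (G.label e) * iden S r.length).seq x') := by
  induction h with
  | nil h => simp at he
  | @cons w p e₁ r x A w' hp hx ih =>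
    have hwn : w.Nodup := (Multiset.nodup_add.1 hn).1
    have hn' : (((G.tgt e₁ ++ r : List G.V) : Multiset G.V) +
        A.bind (fun e => (G.tgt e : Multiset G.V))).Nodup := by
      rw [Multiset.coe_eq_coe.2 hp.perm, Multiset.cons_bind, ← Multiset.coe_add] at hn
      refine Multiset.nodup_of_le ?_ hn
      rw [← Multiset.coe_add, add_assoc, add_assoc, add_left_comm _ (r : Multiset G.V)]
      exact Multiset.le_add_left _ _
    by_cases hee : e = e₁
    · subst hee
      exact ⟨r, p, x, A, rfl, hp, hx.runs, rfl⟩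
    obtain ⟨r', q, x', B, rfl, hq, hx', rfl⟩ := ih hn'
      ((Multiset.mem_cons.1 he).resolve_left hee)
      (fun v hv e' he' => hmin v hv e' (Multiset.mem_cons_of_mem he'))
    have hn₁ : (G.tgt e₁ ++ r).Nodup := (Multiset.nodup_add.1 hn').1
    have hn₂ : (G.src e ++ r').Nodup := hq.perm.nodup_iff.1 hn₁
    obtain ⟨u, hu₁, hu₂⟩ := exists_perm_append hq.perm
      (fun v hv => hmin v hv e₁ (Multiset.mem_cons_self _ _)) (List.nodup_append.1 hn₂).1
    obtain ⟨p₁, hp₁⟩ := Runs.exists_of_perm hu₁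
    obtain ⟨q₂, hq₂⟩ := Runs.exists_of_perm hu₂
    have a₁ : Runs G (G.tgt e₁ ++ r) (iden S (G.tgt e₁).length * p₁) 0
        (G.tgt e₁ ++ (G.src e ++ u)) := by simpa using (Runs.id _).par hp₁
    have a₂ : ∀ t : List G.V, Runs G (t ++ (G.src e ++ u))
        (Mor.swap S t.length (G.src e).length * iden S u.length) 0 (G.src e ++ (t ++ u)) :=
      fun t => by simpa using (Runs.swap t (G.src e)).par (.id u)
    have a₃ : ∀ t : List G.V, Runs G (t ++ (G.tgt e₁ ++ u)) (iden S t.length * q₂) 0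
        (t ++ r') := fun t => by simpa using (Runs.id t).par hq₂
    have a₄ : Runs G (G.src e₁ ++ r) (iden S (G.src e₁).length * p₁) 0
        (G.src e₁ ++ (G.src e ++ u)) := by simpa using (Runs.id _).par hp₁
    have a₅ : Runs G (G.tgt e ++ (G.src e₁ ++ u))
        (iden S (G.tgt e).length * (Mor.op (G.label e₁) * iden S u.length)) {e₁}
        (G.tgt e ++ (G.tgt e₁ ++ u)) := by simpa using (Runs.id _).par (Runs.op_par e₁ u)
    obtain rfl : q = _ := Runs.perm_unique hn₁ hq
      (by simpa only [add_zero] using a₁.seq ((a₂ _).seq (a₃ _)))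
    refine ⟨G.src e₁ ++ u, _, _, e₁ ::ₘ B, Multiset.cons_swap _ _ _,
      by simpa only [add_zero] using hp.seq (a₄.seq (a₂ _)),
      by simpa only [zero_add, Multiset.singleton_add] using a₅.seq ((a₃ _).seq hx'), ?_⟩
    have hop := Runs.op_par e r'
    have hop₁ := Runs.op_par e₁ r
    have hop' := Runs.op_par e (G.src e₁ ++ u)
    have hex := exchange (f := Mor.op (G.label e₁)) (g := Mor.op (G.label e))
      (G.src_len e₁).symm (G.tgt_len e₁).symm (G.src_len e).symm (G.tgt_len e).symm hp₁.dom
      (hp₁.cod.trans List.length_append) (hq₂.dom.trans List.length_append) hq₂.cod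
    have h₁ := (a₂ (G.tgt e₁)).seq (a₃ (G.src e))
    rw [← List.length_append] at hex
    rw [a₁.seq_seq h₁ (hop.seq hx'), (a₂ _).seq_seq (a₃ _) (hop.seq hx'),
      ← (a₃ _).seq_seq hop hx', ← (a₂ _).seq_seq ((a₃ _).seq hop) hx',
      ← a₁.seq_seq ((a₂ _).seq ((a₃ _).seq hop)) hx',
      ← hop₁.seq_seq (a₁.seq ((a₂ _).seq ((a₃ _).seq hop))) hx', hex,
      a₄.seq_seq ((a₂ _).seq (hop'.seq (a₅.seq (a₃ _)))) hx',
      (a₂ _).seq_seq (hop'.seq (a₅.seq (a₃ _))) hx', hop'.seq_seq (a₅.seq (a₃ _)) hx',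
      a₅.seq_seq (a₃ _) hx', hp.seq_seq (a₄.seq (a₂ _)) (hop'.seq (a₅.seq ((a₃ _).seq hx'))),
      a₄.seq_seq (a₂ _) (hop'.seq (a₅.seq ((a₃ _).seq hx')))]

end

section

variable {S : MonSig} {G : LHyp S}
open Mor

theorem Lay.unique {w x A w'} (hx : Lay G w x A w') {y : Mor S} (hy : Lay G w y A w')
    (hn : ((w : Multiset G.V) + A.bind (fun e => (G.tgt e : Multiset G.V))).Nodup) : x = y := by
  induction hx generalizing y with
  | nil h =>
    have hy' := hy.runs
    have hw := (Multiset.nodup_add.1 hn).1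
    exact Runs.perm_unique hw h hy'
  | @cons w p e r x A w' hp hx ih =>
    have hn' : (((G.src e ++ r : List G.V) : Multiset G.V) + ((G.tgt e : Multiset G.V) +
        A.bind (fun e => (G.tgt e : Multiset G.V)))).Nodup := by
      rwa [Multiset.coe_eq_coe.2 hp.perm, Multiset.cons_bind] at hn
    have hd := (Multiset.nodup_add.1 hn').2.2
    obtain ⟨r', p', y', B, hB, hp', hy', rfl⟩ := hy.extract hn (Multiset.mem_cons_self e A)
      (fun v hv e' he' ht => by
        rw [← Multiset.cons_bind (f := fun e => (G.tgt e : Multiset G.V))] at hd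
        exact Multiset.disjoint_left.1 hd
          (Multiset.mem_coe.2 (List.mem_append_left r hv)) (Multiset.mem_bind.2 ⟨e', he', ht⟩))
    obtain rfl := (Multiset.cons_inj_right e).1 hB
    have hr : r.Perm r' := (List.perm_append_left_iff _).1 (hp.perm.symm.trans hp'.perm)
    obtain ⟨z, hz⟩ := Runs.exists_of_perm hr
    have z₁ : ∀ t : List G.V, Runs G (t ++ r) (iden S t.length * z) 0 (t ++ r') := fun t => by
      simpa using (Runs.id t).par hz
    have e₁ : p' = p.seq (iden S (G.src e).length * z) :=
      Runs.perm_unique (Multiset.nodup_add.1 hn).1 hp' (by simpa using hp.seq (z₁ _))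
    have e₂ : x = (iden S (G.tgt e).length * z).seq y' := by
      refine ih (by simpa using (Runs.seq (z₁ _) hy').lay) ?_
      rw [← Multiset.coe_add, add_assoc, add_left_comm, add_comm, add_right_comm] at hn'
      refine Multiset.nodup_of_le ?_ hn'
      rw [← Multiset.coe_add]
      refine le_of_le_of_eq (Multiset.le_add_right _ (G.src e : Multiset G.V)) ?_
      abel
    rw [e₁, e₂, hp.seq_seq (z₁ _) ((Runs.op_par e r').seq hy'),
      ← (z₁ _).seq_seq (Runs.op_par e r') hy', ← (Runs.op_par e r).seq_seq (z₁ _) hy',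
      ← mul_eq_seq_left (by simp [G.tgt_len]) hz.dom, ← mul_eq_seq_right (by simp [G.src_len]) hz.cod]

/-- Coherence: in a hypergraph where nodes are produced at most once, a morphism is determined
by its source, its target and the hyperedges it uses. -/
theorem Runs.unique {w x y A w'} (hx : Runs G w x A w') (hy : Runs G w y A w')
    (hn : ((w : Multiset G.V) + A.bind (fun e => (G.tgt e : Multiset G.V))).Nodup) : x = y :=
  hx.lay.unique hy.lay hn

/-- The hyperedges used by a run can be ranked so that ranks increase along successors. -/
theorem Lay.exists_rank {w x A w'} (h : Lay G w x A w')
    (hn : ((w : Multiset G.V) + A.bind (fun e => (G.tgt e : Multiset G.V))).Nodup) :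
    ∃ rank : G.E → ℕ, ∀ e ∈ A, ∀ e' ∈ A, (∃ v, v ∈ G.tgt e ∧ v ∈ G.src e') →
      rank e < rank e' := by
  classical
  induction h with
  | nil h => exact ⟨fun _ => 0, by simp⟩
  | @cons w p e r x A w' hp hx ih =>
    have hn' : (((G.src e ++ r : List G.V) : Multiset G.V) + (e ::ₘ A).bind
        (fun e => (G.tgt e : Multiset G.V))).Nodup := by
      rwa [Multiset.coe_eq_coe.2 hp.perm] at hn
    have hd := (Multiset.nodup_add.1 hn').2.2
    have hnot : ∀ e' ∈ e ::ₘ A, ∀ v ∈ G.tgt e', v ∉ G.src e := fun e' he' v ht hv =>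
      Multiset.disjoint_left.1 hd
          (Multiset.mem_coe.2 (List.mem_append_left r hv)) (Multiset.mem_bind.2 ⟨e', he', ht⟩)
    obtain ⟨rank, hrank⟩ := ih (by
      rw [Multiset.cons_bind, ← Multiset.coe_add, add_assoc] at hn'
      rw [← Multiset.coe_add]
      refine Multiset.nodup_of_le ?_ hn'
      refine le_of_le_of_eq (Multiset.le_add_right _ (G.src e : Multiset G.V)) ?_
      abel)
    refine ⟨fun e' => if e' = e then 0 else rank e' + 1, ?_⟩
    rintro e₁ he₁ e₂ he₂ ⟨v, hv₁, hv₂⟩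
    have h₂ : e₂ ≠ e := by
      rintro rfl
      exact hnot e₁ he₁ v hv₁ hv₂
    have h₂' := (Multiset.mem_cons.1 he₂).resolve_left h₂
    by_cases h₁ : e₁ = e
    · simp [h₁, h₂]
    · have := hrank e₁ ((Multiset.mem_cons.1 he₁).resolve_left h₁) e₂ h₂' ⟨v, hv₁, hv₂⟩
      simpa [h₁, h₂] using this

end

section

variable {S : MonSig}
open Mor

/-- The analogue of `Runs` for terms, by recursion on the term. -/
def TRuns (G : LHyp S) : {m n : ℕ} → Term S m n → List G.V → Multiset G.E → List G.V → Prop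
  | _, _, .op o, w, A, w' => ∃ e, G.label e = o ∧ w = G.src e ∧ A = {e} ∧ w' = G.tgt e
  | _, _, .id n, w, A, w' => w.length = n ∧ A = 0 ∧ w' = w
  | _, _, .symm m n, w, A, w' =>
      ∃ a b, a.length = m ∧ b.length = n ∧ w = a ++ b ∧ A = 0 ∧ w' = b ++ a
  | _, _, .seq t u, w, A, w' => ∃ v A₁ A₂, TRuns G t w A₁ v ∧ TRuns G u v A₂ w' ∧ A = A₁ + A₂
  | _, _, .par t u, w, A, w' => ∃ w₁ w₂ A₁ A₂ w₁' w₂', TRuns G t w₁ A₁ w₁' ∧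
      TRuns G u w₂ A₂ w₂' ∧ w = w₁ ++ w₂ ∧ A = A₁ + A₂ ∧ w' = w₁' ++ w₂'

namespace TRuns
variable {G : LHyp S}

theorem runs {m n : ℕ} {t : Term S m n} {w A w'} (h : TRuns G t w A w') :
    Runs G w (Mor.mk t) A w' := by
  induction t generalizing w A w' with
  | op o =>
    obtain ⟨e, rfl, rfl, rfl, rfl⟩ := h
    exact .op e
  | id n =>
    obtain ⟨rfl, rfl, rfl⟩ := h
    exact .id _
  | symm m n =>
    obtain ⟨a, b, rfl, rfl, rfl, rfl, rfl⟩ := h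
    exact .swap a b
  | seq t u ih ih' =>
    obtain ⟨v, A₁, A₂, h₁, h₂, rfl⟩ := h
    rw [← mk_seq]
    exact (ih h₁).seq (ih' h₂)
  | par t u ih ih' =>
    obtain ⟨w₁, w₂, A₁, A₂, w₁', w₂', h₁, h₂, rfl, rfl, rfl⟩ := h
    rw [← mk_mul]
    exact (ih h₁).par (ih' h₂)

theorem length_left {m n : ℕ} {t : Term S m n} {w A w'} (h : TRuns G t w A w') : w.length = m :=
  h.runs.dom.symm

theorem length_right {m n : ℕ} {t : Term S m n} {w A w'} (h : TRuns G t w A w') :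
    w'.length = n :=
  h.runs.cod.symm

theorem map {H : LHyp S} (f : LHom G H) {m n : ℕ} {t : Term S m n} {w A w'}
    (h : TRuns G t w A w') :
    TRuns H t (w.map f.nodeMap) (A.map f.edgeMap) (w'.map f.nodeMap) := by
  induction t generalizing w A w' with
  | op o =>
    obtain ⟨e, rfl, rfl, rfl, rfl⟩ := h
    exact ⟨f.edgeMap e, f.label_eq e, (f.src_eq e).symm, by simp, (f.tgt_eq e).symm⟩
  | id n =>
    obtain ⟨rfl, rfl, rfl⟩ := h
    exact ⟨by simp, by simp, rfl⟩
  | symm m n =>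
    obtain ⟨a, b, rfl, rfl, rfl, rfl, rfl⟩ := h
    exact ⟨a.map f.nodeMap, b.map f.nodeMap, by simp, by simp, by simp, by simp, by simp⟩
  | seq t u ih ih' =>
    obtain ⟨v, A₁, A₂, h₁, h₂, rfl⟩ := h
    exact ⟨_, _, _, ih h₁, ih' h₂, by simp⟩
  | par t u ih ih' =>
    obtain ⟨w₁, w₂, A₁, A₂, w₁', w₂', h₁, h₂, rfl, rfl, rfl⟩ := h
    exact ⟨_, _, _, _, _, _, ih h₁, ih' h₂, by simp, by simp, by simp⟩

theorem cast_iff {m n m' n' : ℕ} (h₁ : m = m') (h₂ : n = n') {t : Term S m n} {w A w'} :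
    TRuns G (castTerm h₁ h₂ t) w A w' ↔ TRuns G t w A w' := by
  subst h₁ h₂
  rfl

theorem id_append {m n : ℕ} {t : Term S m n} {w A w'} (h : TRuns G t w A w') (v : List G.V) {k : ℕ}
    (hv : v.length = k) : TRuns G ((Term.id k).par t) (v ++ w) A (v ++ w') :=
  ⟨v, w, 0, A, v, w', ⟨hv, rfl, rfl⟩, h, rfl, (zero_add A).symm, rfl⟩

theorem append_id {m n : ℕ} {t : Term S m n} {w A w'} (h : TRuns G t w A w') (v : List G.V) {k : ℕ}
    (hv : v.length = k) : TRuns G (t.par (Term.id k)) (w ++ v) A (w' ++ v) :=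
  ⟨w, v, A, 0, w', v, h, ⟨hv, rfl, rfl⟩, rfl, (add_zero A).symm, rfl⟩

theorem exists_append {m n : ℕ} {w : List G.V} (h : w.length = m + n) :
    ∃ a b, w = a ++ b ∧ a.length = m ∧ b.length = n :=
  ⟨w.take m, w.drop m, (List.take_append_drop m w).symm, by simp; omega, by simp; omega⟩

/-- Runs respect the laws of symmetric strict monoidal categories. -/
theorem congr {m n : ℕ} {t u : Term S m n} (h : SMC S t u) (w : List G.V) (A : Multiset G.E)
    (w' : List G.V) : TRuns G t w A w' ↔ TRuns G u w A w' := by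
  induction h generalizing w A w' with
  | refl t => rfl
  | symm' _ ih => exact (ih w A w').symm
  | trans _ _ ih ih' => exact (ih w A w').trans (ih' w A w')
  | seq_congr _ _ ih ih' => simp only [TRuns, ih, ih']
  | par_congr _ _ ih ih' => simp only [TRuns, ih, ih']
  | seq_assoc t u v =>
    constructor
    · rintro ⟨v₁, A₁, A₂, ⟨v₂, A₃, A₄, h₁, h₂, rfl⟩, h₃, rfl⟩
      exact ⟨_, _, _, h₁, ⟨_, _, _, h₂, h₃, rfl⟩, by rw [add_assoc]⟩
    · rintro ⟨v₁, A₁, A₂, h₁, ⟨v₂, A₃, A₄, h₂, h₃, rfl⟩, rfl⟩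
      exact ⟨_, _, _, ⟨_, _, _, h₁, h₂, rfl⟩, h₃, by rw [add_assoc]⟩
  | id_seq t =>
    constructor
    · rintro ⟨v₁, A₁, A₂, ⟨-, rfl, rfl⟩, h₃, rfl⟩
      simpa using h₃
    · intro h
      exact ⟨_, _, _, ⟨h.length_left, rfl, rfl⟩, h, by simp⟩
  | seq_id t =>
    constructor
    · rintro ⟨v₁, A₁, A₂, h₃, ⟨-, rfl, rfl⟩, rfl⟩
      simpa using h₃
    · intro h
      exact ⟨_, _, _, h, ⟨h.length_right, rfl, rfl⟩, by simp⟩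
  | par_assoc t u v =>
    rw [cast_iff]
    constructor
    · rintro ⟨_, w₃, _, A₃, _, w₃', ⟨w₁, w₂, A₁, A₂, w₁', w₂', h₁, h₂, rfl, rfl, rfl⟩, h₃,
        rfl, rfl, rfl⟩
      exact ⟨_, _, _, _, _, _, h₁, ⟨_, _, _, _, _, _, h₂, h₃, rfl, rfl, rfl⟩,
        by simp, by simp [add_assoc], by simp⟩
    · rintro ⟨w₁, _, A₁, _, w₁', _, h₁, ⟨w₂, w₃, A₂, A₃, w₂', w₃', h₂, h₃, rfl, rfl, rfl⟩,
        rfl, rfl, rfl⟩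
      exact ⟨_, _, _, _, _, _, ⟨_, _, _, _, _, _, h₁, h₂, rfl, rfl, rfl⟩, h₃,
        by simp, by simp [add_assoc], by simp⟩
  | id_zero_par t =>
    rw [cast_iff]
    constructor
    · rintro ⟨w₁, w₂, _, A₂, _, w₂', ⟨h, rfl, rfl⟩, h₂, rfl, rfl, rfl⟩
      obtain rfl := List.length_eq_zero_iff.1 h
      simpa using h₂
    · intro h
      exact h.id_append [] rfl
  | par_id_zero t =>
    constructor
    · rintro ⟨w₁, w₂, A₁, _, w₁', _, h₂, ⟨h, rfl, rfl⟩, rfl, rfl, rfl⟩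
      obtain rfl := List.length_eq_zero_iff.1 h
      simpa using h₂
    · intro h
      simpa using h.append_id [] rfl
  | interchange s u t v =>
    constructor
    · rintro ⟨w₁, w₂, _, _, w₁', w₂', ⟨v₁, A₁, A₂, h₁, h₂, rfl⟩, ⟨v₂, A₃, A₄, h₃, h₄, rfl⟩,
        rfl, rfl, rfl⟩
      exact ⟨_, _, _, ⟨_, _, _, _, _, _, h₁, h₃, rfl, rfl, rfl⟩,
        ⟨_, _, _, _, _, _, h₂, h₄, rfl, rfl, rfl⟩, by abel⟩
    · rintro ⟨_, _, _, ⟨w₁, w₂, A₁, A₂, v₁, v₂, h₁, h₃, rfl, rfl, rfl⟩,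
        ⟨v₁', v₂', A₃, A₄, w₁', w₂', h₂, h₄, hv, rfl, rfl⟩, rfl⟩
      obtain ⟨rfl, rfl⟩ := List.append_inj hv (h₁.length_right.trans h₂.length_left.symm)
      exact ⟨_, _, _, _, _, _, ⟨_, _, _, h₁, h₂, rfl⟩, ⟨_, _, _, h₃, h₄, rfl⟩, rfl, by abel, rfl⟩
  | id_par_id m n =>
    constructor
    · rintro ⟨w₁, w₂, _, _, _, _, ⟨rfl, rfl, rfl⟩, ⟨rfl, rfl, rfl⟩, rfl, rfl, rfl⟩
      exact ⟨by simp, by simp, rfl⟩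
    · rintro ⟨h, rfl, rfl⟩
      obtain ⟨a, b, rfl, ha, hb⟩ := exists_append h
      exact ⟨a, b, 0, 0, a, b, ⟨ha, rfl, rfl⟩, ⟨hb, rfl, rfl⟩, rfl, rfl, rfl⟩
  | symm_symm m n =>
    constructor
    · rintro ⟨_, _, _, ⟨a, b, ha, hb, rfl, rfl, rfl⟩, ⟨b', a', hb', ha', h, rfl, rfl⟩, rfl⟩
      obtain ⟨rfl, rfl⟩ := List.append_inj h (hb.trans hb'.symm)
      exact ⟨by simp [ha, hb], rfl, rfl⟩
    · rintro ⟨h, rfl, rfl⟩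
      obtain ⟨a, b, rfl, ha, hb⟩ := exists_append h
      exact ⟨b ++ a, 0, 0, ⟨a, b, ha, hb, rfl, rfl, rfl⟩, ⟨b, a, hb, ha, rfl, rfl, rfl⟩, rfl⟩
  | symm_hexagon m n o =>
    rw [cast_iff]
    constructor
    · rintro ⟨_, _, _, h₁, ⟨b', _, _, _, _, _, ⟨hb', rfl, rfl⟩, ⟨a', c', ha', hc', rfl, rfl, rfl⟩,
        hv, rfl, rfl⟩, rfl⟩
      rw [cast_iff] at h₁
      obtain ⟨_, _, _, _, _, c, ⟨a, b, ha, hb, rfl, rfl, rfl⟩, ⟨hc, rfl, rfl⟩, rfl, rfl, rfl⟩ := h₁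
      rw [List.append_assoc] at hv
      obtain ⟨rfl, hv'⟩ := List.append_inj hv (hb.trans hb'.symm)
      obtain ⟨rfl, rfl⟩ := List.append_inj hv' (ha.trans ha'.symm)
      exact ⟨a, b ++ c, ha, by simp [hb, hc], by simp, by simp, by simp⟩
    · rintro ⟨a, d, ha, hd, rfl, rfl, rfl⟩
      obtain ⟨b, c, rfl, hb, hc⟩ := exists_append hd
      refine ⟨b ++ (a ++ c), 0, 0, (cast_iff rfl _).2 ?_, ?_, rfl⟩
      · rw [← List.append_assoc, ← List.append_assoc]
        exact ⟨a ++ b, c, 0, 0, b ++ a, c, ⟨a, b, ha, hb, rfl, rfl, rfl⟩, ⟨hc, rfl, rfl⟩, rfl, rfl, rfl⟩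
      · rw [List.append_assoc]
        exact ⟨b, a ++ c, 0, 0, b, c ++ a, ⟨hb, rfl, rfl⟩, ⟨a, c, ha, hc, rfl, rfl, rfl⟩, rfl, rfl, rfl⟩
  | symm_nat s m =>
    constructor
    · rintro ⟨_, _, _, ⟨w₁, w₂, _, _, w₁', _, h, ⟨hw₂, rfl, rfl⟩, rfl, rfl, rfl⟩,
        ⟨b, a, hb, ha, hv, rfl, rfl⟩, rfl⟩
      obtain ⟨rfl, rfl⟩ := List.append_inj hv (h.length_right.trans hb.symm)
      exact ⟨_, _, _, ⟨w₁, _, h.length_left, hw₂, rfl, rfl, rfl⟩, h.id_append _ hw₂, by simp⟩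
    · rintro ⟨_, _, _, ⟨a, b, ha, hb, rfl, rfl, rfl⟩,
        ⟨b', a', _, _, _, w₁', ⟨hb', rfl, rfl⟩, h, hv, rfl, rfl⟩, rfl⟩
      obtain ⟨rfl, rfl⟩ := List.append_inj hv (hb.trans hb'.symm)
      exact ⟨_, _, _, h.append_id b hb, ⟨w₁', b, h.length_right, hb, rfl, rfl, rfl⟩, by simp⟩

end TRuns

theorem Runs.map {G H : LHyp S} (f : LHom G H) {w x A w'} (h : Runs G w x A w') :
    Runs H (w.map f.nodeMap) x (A.map f.edgeMap) (w'.map f.nodeMap) := by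
  induction h with
  | op e => simpa [f.label_eq, f.src_eq, f.tgt_eq] using Runs.op (f.edgeMap e)
  | id w => simpa using Runs.id (w.map f.nodeMap)
  | swap a b => simpa using Runs.swap (a.map f.nodeMap) (b.map f.nodeMap)
  | seq _ _ ih ih' => simpa using ih.seq ih'
  | par _ _ ih ih' => simpa using ih.par ih'

end

section

variable {S : MonSig}
open Mor

theorem nodup_map_inl_add_map_inr {α β : Type} {s : Multiset α} {t : Multiset β} (hs : s.Nodup)
    (ht : t.Nodup) : (s.map Sum.inl + t.map Sum.inr : Multiset (α ⊕ β)).Nodup := by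
  rw [Multiset.nodup_add]
  refine ⟨hs.map Sum.inl_injective, ht.map Sum.inr_injective, ?_⟩
  rw [Multiset.disjoint_left]
  simp

theorem mem_map_inl_add_map_inr {α β : Type} {s : Multiset α} {t : Multiset β}
    (hs : ∀ a, a ∈ s) (ht : ∀ b, b ∈ t) (c : α ⊕ β) : c ∈ s.map Sum.inl + t.map Sum.inr := by
  rcases c with a | b
  · simp [hs a]
  · simp [ht b]

/-- The hyperedges of the interpretation of a term. -/
def edges : {m n : ℕ} → (t : Term S m n) → Multiset (interp t).G.E
  | _, _, .op _ => {()}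
  | _, _, .id _ => 0
  | _, _, .symm _ _ => 0
  | _, _, .seq t u => (edges t).map Sum.inl + (edges u).map Sum.inr
  | _, _, .par t u => (edges t).map Sum.inl + (edges u).map Sum.inr

theorem nodup_edges {m n : ℕ} (t : Term S m n) : (edges t).Nodup := by
  induction t with
  | op o => exact Multiset.nodup_singleton _
  | id n => exact Multiset.nodup_zero
  | symm m n => exact Multiset.nodup_zero
  | seq t u ih ih' => exact nodup_map_inl_add_map_inr ih ih'
  | par t u ih ih' => exact nodup_map_inl_add_map_inr ih ih'

theorem mem_edges {m n : ℕ} (t : Term S m n) (e : (interp t).G.E) : e ∈ edges t := by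
  induction t with
  | op o => exact Multiset.mem_singleton_self _
  | id n => exact e.elim
  | symm m n => exact e.elim
  | seq t u ih ih' => exact mem_map_inl_add_map_inr ih ih' e
  | par t u ih ih' => exact mem_map_inl_add_map_inr ih ih' e

namespace LCospan

/-- The inclusion of the first factor in a composite. -/
def compInl {m n p : Type} (A : LCospan S m n) (B : LCospan S n p) : LHom A.G (A.comp B).G where
  nodeMap v := Quot.mk _ (Sum.inl v)
  edgeMap := Sum.inl
  src_eq _ := rfl
  tgt_eq _ := rfl
  label_eq _ := rfl

/-- The inclusion of the second factor in a composite. -/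
def compInr {m n p : Type} (A : LCospan S m n) (B : LCospan S n p) : LHom B.G (A.comp B).G where
  nodeMap v := Quot.mk _ (Sum.inr v)
  edgeMap := Sum.inr
  src_eq _ := rfl
  tgt_eq _ := rfl
  label_eq _ := rfl

/-- The inclusion of the first factor in a monoidal product. -/
def tensorInl {m₁ n₁ m₂ n₂ : Type} (A : LCospan S m₁ n₁) (B : LCospan S m₂ n₂) :
    LHom A.G (A.tensor B).G where
  nodeMap := Sum.inl
  edgeMap := Sum.inl
  src_eq _ := rfl
  tgt_eq _ := rfl
  label_eq _ := rfl

/-- The inclusion of the second factor in a monoidal product. -/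
def tensorInr {m₁ n₁ m₂ n₂ : Type} (A : LCospan S m₁ n₁) (B : LCospan S m₂ n₂) :
    LHom B.G (A.tensor B).G where
  nodeMap := Sum.inr
  edgeMap := Sum.inr
  src_eq _ := rfl
  tgt_eq _ := rfl
  label_eq _ := rfl

end LCospan

theorem ofFn_finSum {α : Type} {m n : ℕ} (f : Fin m ⊕ Fin n → α) :
    List.ofFn (f ∘ finSumFinEquiv.symm) =
      List.ofFn (fun i => f (Sum.inl i)) ++ List.ofFn (fun i => f (Sum.inr i)) := by
  rw [← List.ofFn_fin_append]
  congr 1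
  ext i
  refine Fin.addCases (fun i => ?_) (fun i => ?_) i <;> simp

theorem ofFn_fin_add {α : Type} {m n : ℕ} (f : Fin (m + n) → α) :
    List.ofFn f = List.ofFn (fun i => f (Fin.castAdd n i)) ++
      List.ofFn (fun i => f (Fin.natAdd m i)) :=
  List.ofFn_add

theorem ofFn_get_cast {α : Type} (w : List α) {n : ℕ} (h : n = w.length) :
    List.ofFn (fun i : Fin n => w.get (Fin.cast h i)) = w := by
  subst h
  exact List.ofFn_get w

/-- Every term has a run in its own interpretation, from the inputs to the outputs, using each
hyperedge once. -/
theorem tRuns_interp {m n : ℕ} (t : Term S m n) :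
    TRuns (interp t).G t (List.ofFn (interp t).inp) (edges t) (List.ofFn (interp t).out) := by
  induction t with
  | op o =>
    refine ⟨(), rfl, ?_, rfl, ?_⟩
    · change List.ofFn Sum.inl = (List.finRange _).map Sum.inl
      rw [List.ofFn_eq_map]
    · change List.ofFn Sum.inr = (List.finRange _).map Sum.inr
      rw [List.ofFn_eq_map]
  | id n => exact ⟨List.length_ofFn, rfl, rfl⟩
  | symm m n =>
    refine ⟨_, _, List.length_ofFn, List.length_ofFn, ofFn_fin_add _, rfl, ?_⟩
    refine (ofFn_fin_add _).trans ?_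
    simp [interp, symmLCospan]
  | seq t u ih ih' =>
    have h₁ := ih.map (LCospan.compInl (interp t) (interp u))
    have h₂ := ih'.map (LCospan.compInr (interp t) (interp u))
    have h : (LCospan.compInl (interp t) (interp u)).nodeMap ∘ (interp t).out =
        (LCospan.compInr (interp t) (interp u)).nodeMap ∘ (interp u).inp :=
      funext fun k => Quot.sound ⟨k, rfl, rfl⟩
    rw [List.map_ofFn, List.map_ofFn] at h₁ h₂
    rw [h] at h₁
    exact ⟨_, _, _, h₁, h₂, rfl⟩
  | par t u ih ih' =>
    refine ⟨_, _, _, _, _, _, ih.map (LCospan.tensorInl _ _), ih'.map (LCospan.tensorInr _ _),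
      ?_, rfl, ?_⟩
    · rw [List.map_ofFn, List.map_ofFn]
      exact ofFn_finSum _
    · rw [List.map_ofFn, List.map_ofFn]
      exact ofFn_finSum _

end

section

variable {S : MonSig}
open Mor

namespace LCospan

/-- The map out of a composite induced by compatible maps out of its factors. -/
def compDesc {m n p : Type} {A : LCospan S m n} {B : LCospan S n p} {G : LHyp S}
    (φ : LHom A.G G) (ψ : LHom B.G G) (h : φ.nodeMap ∘ A.out = ψ.nodeMap ∘ B.inp) :
    LHom (A.comp B).G G where
  nodeMap := Quot.lift (Sum.elim φ.nodeMap ψ.nodeMap) (by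
    rintro _ _ ⟨k, rfl, rfl⟩
    exact congrFun h k)
  edgeMap := Sum.elim φ.edgeMap ψ.edgeMap
  src_eq := by rintro (e | e) <;> simp [comp, φ.src_eq, ψ.src_eq]
  tgt_eq := by rintro (e | e) <;> simp [comp, φ.tgt_eq, ψ.tgt_eq]
  label_eq := by rintro (e | e) <;> simp [comp, φ.label_eq, ψ.label_eq]

/-- The map out of a monoidal product induced by maps out of its factors. -/
def tensorDesc {m₁ n₁ m₂ n₂ : Type} {A : LCospan S m₁ n₁} {B : LCospan S m₂ n₂} {G : LHyp S}
    (φ : LHom A.G G) (ψ : LHom B.G G) : LHom (A.tensor B).G G where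
  nodeMap := Sum.elim φ.nodeMap ψ.nodeMap
  edgeMap := Sum.elim φ.edgeMap ψ.edgeMap
  src_eq := by rintro (e | e) <;> simp [tensor, φ.src_eq, ψ.src_eq]
  tgt_eq := by rintro (e | e) <;> simp [tensor, φ.tgt_eq, ψ.tgt_eq]
  label_eq := by rintro (e | e) <;> simp [tensor, φ.label_eq, ψ.label_eq]

end LCospan

/-- A run of a term in `G` is the image of its run in its own interpretation. -/
theorem TRuns.exists_hom {G : LHyp S} {m n : ℕ} {t : Term S m n} {w A w'} (h : TRuns G t w A w') :
    ∃ φ : LHom (interp t).G G, w = List.ofFn (φ.nodeMap ∘ (interp t).inp) ∧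
      A = (edges t).map φ.edgeMap ∧ w' = List.ofFn (φ.nodeMap ∘ (interp t).out) := by
  induction t generalizing w A w' with
  | op o =>
    obtain ⟨e, rfl, rfl, rfl, rfl⟩ := h
    let φ : LHom (interp (Term.op (G.label e))).G G :=
      { nodeMap := Sum.elim (fun i => (G.src e).get (Fin.cast (G.src_len e).symm i))
          (fun i => (G.tgt e).get (Fin.cast (G.tgt_len e).symm i))
        edgeMap := fun _ => e
        src_eq := fun _ => by
          conv_lhs => rw [← ofFn_get_cast (G.src e) (G.src_len e).symm]
          simp [interp, genCospan, List.ofFn_eq_map]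
        tgt_eq := fun _ => by
          conv_lhs => rw [← ofFn_get_cast (G.tgt e) (G.tgt_len e).symm]
          simp [interp, genCospan, List.ofFn_eq_map]
        label_eq := fun _ => rfl }
    exact ⟨φ, (ofFn_get_cast _ _).symm, rfl, (ofFn_get_cast _ _).symm⟩
  | id n =>
    obtain ⟨rfl, rfl, rfl⟩ := h
    exact ⟨discreteHom G w'.get, (List.ofFn_get _).symm, rfl, (List.ofFn_get _).symm⟩
  | symm m n =>
    obtain ⟨a, b, rfl, rfl, rfl, rfl, rfl⟩ := h
    refine ⟨discreteHom G (fun i => (a ++ b).get (Fin.cast List.length_append.symm i)),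
      (ofFn_get_cast _ _).symm, rfl, ?_⟩
    rw [ofFn_fin_add]
    congr 1
    · refine (List.ofFn_get b).symm.trans (congrArg _ (funext fun i => ?_))
      change b.get i = (a ++ b).get (Fin.cast List.length_append.symm
        (finAddFlip (Fin.castAdd a.length i)))
      simp
    · refine (List.ofFn_get a).symm.trans (congrArg _ (funext fun i => ?_))
      change a.get i = (a ++ b).get (Fin.cast List.length_append.symm
        (finAddFlip (Fin.natAdd b.length i)))
      simp
  | seq t u ih ih' =>
    obtain ⟨v, A₁, A₂, h₁, h₂, rfl⟩ := h
    obtain ⟨φ, rfl, rfl, hv⟩ := ih h₁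
    obtain ⟨ψ, hv', rfl, rfl⟩ := ih' h₂
    have hv := List.ofFn_injective (hv.symm.trans hv')
    refine ⟨LCospan.compDesc φ ψ hv, rfl, ?_, rfl⟩
    change _ = Multiset.map (Sum.elim φ.edgeMap ψ.edgeMap)
      ((edges t).map Sum.inl + (edges u).map Sum.inr)
    simp
  | par t u ih ih' =>
    obtain ⟨w₁, w₂, A₁, A₂, w₁', w₂', h₁, h₂, rfl, rfl, rfl⟩ := h
    obtain ⟨φ, rfl, rfl, rfl⟩ := ih h₁
    obtain ⟨ψ, rfl, rfl, rfl⟩ := ih' h₂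
    refine ⟨LCospan.tensorDesc φ ψ, ?_, ?_, ?_⟩
    · exact (ofFn_finSum ((LCospan.tensorDesc φ ψ).nodeMap ∘ ((interp t).tensor (interp u)).inp)).symm
    · change _ = Multiset.map (Sum.elim φ.edgeMap ψ.edgeMap)
        ((edges t).map Sum.inl + (edges u).map Sum.inr)
      simp
    · exact (ofFn_finSum ((LCospan.tensorDesc φ ψ).nodeMap ∘ ((interp t).tensor (interp u)).out)).symm

end

section

variable {S : MonSig}
open Mor

namespace LCospan

/-- The inputs of a cospan and the targets of a collection of hyperedges. -/
def produced {m n : ℕ} (A : LCospan S (Fin m) (Fin n)) (s : Multiset A.G.E) : Multiset A.G.V :=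
  (List.ofFn A.inp : Multiset A.G.V) + s.bind fun e => (A.G.tgt e : Multiset A.G.V)

theorem bind_tgt_map {G H : LHyp S} (φ : LHom G H) (s : Multiset G.E) :
    ((s.map φ.edgeMap).bind fun e => (H.tgt e : Multiset H.V)) =
      (s.bind fun e => (G.tgt e : Multiset G.V)).map φ.nodeMap := by
  simp only [Multiset.bind_map, φ.tgt_eq, Multiset.map_bind, Multiset.map_coe]

variable {m n p m' n' : ℕ}

theorem produced_comp (A : LCospan S (Fin m) (Fin n)) (B : LCospan S (Fin n) (Fin p))
    (s : Multiset A.G.E) (s' : Multiset B.G.E) :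
    (A.comp B).produced (s.map (compInl A B).edgeMap + s'.map (compInr A B).edgeMap) =
      (A.produced s).map (compInl A B).nodeMap +
        (s'.bind fun e => (B.G.tgt e : Multiset B.G.V)).map (compInr A B).nodeMap := by
  rw [produced, Multiset.add_bind, bind_tgt_map, bind_tgt_map, produced, Multiset.map_add,
    add_assoc, Multiset.map_coe, List.map_ofFn]
  rfl

theorem produced_of_append {A : LCospan S (Fin m) (Fin n)} {B : LCospan S (Fin m') (Fin n')}
    {C : LCospan S (Fin (m + m')) (Fin (n + n'))} (φ : LHom A.G C.G) (ψ : LHom B.G C.G)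
    (h : List.ofFn C.inp = List.ofFn (φ.nodeMap ∘ A.inp) ++ List.ofFn (ψ.nodeMap ∘ B.inp))
    (s : Multiset A.G.E) (s' : Multiset B.G.E) :
    C.produced (s.map φ.edgeMap + s'.map ψ.edgeMap) =
      (A.produced s).map φ.nodeMap + (B.produced s').map ψ.nodeMap := by
  rw [produced, Multiset.add_bind, bind_tgt_map, bind_tgt_map, produced, produced,
    Multiset.map_add, Multiset.map_add, Multiset.map_coe, Multiset.map_coe, List.map_ofFn,
    List.map_ofFn, h, ← Multiset.coe_add, add_add_add_comm]

open Classical in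
theorem nodup_produced_comp {A : LCospan S (Fin m) (Fin n)} {B : LCospan S (Fin n) (Fin p)}
    {s : Multiset A.G.E} {s' : Multiset B.G.E} (hA : (A.produced s).Nodup)
    (hB : (B.produced s').Nodup) :
    ((A.comp B).produced (s.map (compInl A B).edgeMap + s'.map (compInr A B).edgeMap)).Nodup := by
  obtain ⟨hB₁, hB₂, hB₃⟩ := Multiset.nodup_add.1 hB
  have hinj : Function.Injective B.inp := List.nodup_ofFn.1 hB₁
  let ψ : (A.comp B).G.V → A.G.V ⊕ B.G.V :=
    Quot.lift (Sum.elim Sum.inl fun v => if h : ∃ k, v = B.inp k then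
      Sum.inl (A.out h.choose) else Sum.inr v) (by
        rintro _ _ ⟨k, rfl, rfl⟩
        have h : ∃ k', B.inp k = B.inp k' := ⟨k, rfl⟩
        simp only [Sum.elim_inl, Sum.elim_inr, dif_pos h]
        rw [← hinj h.choose_spec])
  rw [produced_comp]
  refine Multiset.Nodup.of_map ψ ?_
  rw [Multiset.map_add, Multiset.map_map, Multiset.map_map]
  convert nodup_map_inl_add_map_inr hA hB₂ using 2
  · rfl
  refine Multiset.map_congr rfl fun v hv => dif_neg ?_
  rintro ⟨k, rfl⟩
  exact Multiset.disjoint_left.1 hB₃ (Multiset.mem_coe.2 (List.mem_ofFn.2 ⟨k, rfl⟩)) hv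

theorem mem_produced_comp {A : LCospan S (Fin m) (Fin n)} {B : LCospan S (Fin n) (Fin p)}
    {s : Multiset A.G.E} {s' : Multiset B.G.E} (hA : ∀ v, v ∈ A.produced s)
    (hB : ∀ v, v ∈ B.produced s') (v : (A.comp B).G.V) :
    v ∈ (A.comp B).produced (s.map (compInl A B).edgeMap + s'.map (compInr A B).edgeMap) := by
  rw [produced_comp, Multiset.mem_add]
  rcases v with ⟨v | v⟩
  · exact .inl (Multiset.mem_map_of_mem _ (hA v))
  · rcases Multiset.mem_add.1 (hB v) with h | h
    · obtain ⟨k, rfl⟩ := List.mem_ofFn.1 (Multiset.mem_coe.1 h)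
      exact .inl (Multiset.mem_map.2 ⟨_, hA (A.out k), Quot.sound ⟨k, rfl, rfl⟩⟩)
    · exact .inr (Multiset.mem_map_of_mem (compInr A B).nodeMap h)

end LCospan

/-- The nodes of the interpretation of a term: the inputs and the targets of the hyperedges. -/
def nodes {m n : ℕ} (t : Term S m n) : Multiset (interp t).G.V :=
  (interp t).produced (edges t)

theorem nodes_par {m₁ n₁ m₂ n₂ : ℕ} (t : Term S m₁ n₁) (u : Term S m₂ n₂) :
    nodes (t.par u) =
      ((nodes t).map Sum.inl + (nodes u).map Sum.inr : Multiset ((interp t).G.V ⊕ (interp u).G.V)) :=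
  LCospan.produced_of_append (C := interp (t.par u)) (LCospan.tensorInl (interp t) (interp u))
    (LCospan.tensorInr (interp t) (interp u)) (ofFn_finSum _) _ _

theorem nodes_id (n : ℕ) : nodes (Term.id (S := S) n) = (List.finRange n : Multiset (Fin n)) := by
  rw [← List.ofFn_id]
  exact add_zero (M := Multiset (Fin n)) _

theorem nodes_symm (m n : ℕ) :
    nodes (Term.symm (S := S) m n) = (List.finRange (m + n) : Multiset (Fin (m + n))) := by
  rw [← List.ofFn_id]
  exact add_zero (M := Multiset (Fin (m + n))) _

theorem nodes_op (o : S.ops) : nodes (Term.op o) =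
    (((List.finRange (S.ar o) : Multiset (Fin (S.ar o))).map Sum.inl +
      (List.finRange (S.coar o) : Multiset (Fin (S.coar o))).map Sum.inr :
      Multiset (Fin (S.ar o) ⊕ Fin (S.coar o)))) := by
  refine congrArg₂ (fun a b : Multiset (Fin (S.ar o) ⊕ Fin (S.coar o)) => a + b) ?_
    (Multiset.singleton_bind _ _)
  exact congrArg _ (List.ofFn_eq_map (f := Sum.inl))

theorem mem_nodes {m n : ℕ} (t : Term S m n) (v : (interp t).G.V) : v ∈ nodes t := by
  induction t with
  | op o =>
    rw [nodes_op]
    exact mem_map_inl_add_map_inr List.mem_finRange List.mem_finRange v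
  | id n =>
    rw [nodes_id]
    exact List.mem_finRange v
  | symm m n =>
    rw [nodes_symm]
    exact List.mem_finRange v
  | seq t u ih ih' => exact LCospan.mem_produced_comp ih ih' v
  | par t u ih ih' =>
    rw [nodes_par]
    exact mem_map_inl_add_map_inr ih ih' v

theorem nodup_nodes {m n : ℕ} (t : Term S m n) : (nodes t).Nodup := by
  induction t with
  | op o =>
    rw [nodes_op]
    exact nodup_map_inl_add_map_inr (List.nodup_finRange _) (List.nodup_finRange _)
  | id n =>
    rw [nodes_id]
    exact List.nodup_finRange _
  | symm m n =>
    rw [nodes_symm]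
    exact List.nodup_finRange _
  | seq t u ih ih' => exact LCospan.nodup_produced_comp ih ih'
  | par t u ih ih' =>
    rw [nodes_par]
    exact nodup_map_inl_add_map_inr ih ih'

theorem nodes_eq {m n : ℕ} (t : Term S m n) : nodes t =
    ((edges t).bind fun e => ((interp t).G.src e : Multiset (interp t).G.V)) +
      (List.ofFn (interp t).out : Multiset (interp t).G.V) :=
  (tRuns_interp t).runs.conservation

theorem nodup_and_forall_mem_iff {ι V E : Type} [Fintype ι] (I : ι → V) (τ : E → List V)
    {A : Multiset E} (hA : A.Nodup) (hA' : ∀ e, e ∈ A) :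
    ((Finset.univ.val.map I + A.bind fun e => (τ e : Multiset V)).Nodup ∧
      ∀ v, v ∈ Finset.univ.val.map I + A.bind fun e => (τ e : Multiset V)) ↔
    Function.Injective I ∧ (∀ v ∈ Set.range I, {p : E × ℕ | (τ p.1)[p.2]? = some v} = ∅) ∧
      ∀ v ∉ Set.range I, ∃! p, p ∈ {p : E × ℕ | (τ p.1)[p.2]? = some v} := by
  have h₁ : (Finset.univ.val.map I).Nodup ↔ Function.Injective I := by
    rw [Finset.nodup_map_iff_injOn, Finset.coe_univ, Set.injOn_univ]
  rw [Multiset.nodup_add, Multiset.nodup_bind, h₁, Multiset.disjoint_left]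
  have hmem : ∀ v, (v ∈ A.bind fun e => (τ e : Multiset V)) ↔
      ∃ p : E × ℕ, (τ p.1)[p.2]? = some v := fun v => by
    simp only [Multiset.mem_bind, Multiset.mem_coe, List.mem_iff_getElem?, hA', true_and,
      Prod.exists]
  simp only [Multiset.mem_add, hmem, Multiset.mem_map, Finset.mem_val, Finset.mem_univ, true_and,
    Set.mem_range, Set.mem_ofPred_eq, Set.eq_empty_iff_forall_notMem, hA', forall_true_left]
  constructor
  · rintro ⟨⟨hI, ⟨h₂, h₃⟩, h₄⟩, h₅⟩
    refine ⟨hI, fun v hv p hp => h₄ hv ⟨p, hp⟩, fun v hv => ?_⟩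
    obtain ⟨p, hp⟩ := (h₅ v).resolve_left hv
    refine ⟨p, hp, fun q hq => ?_⟩
    obtain ⟨e, i⟩ := p
    obtain ⟨e', i'⟩ := q
    have he : e' = e := by
      by_contra hne
      have : Std.Symm (Function.onFun Disjoint fun e => (τ e : Multiset V)) :=
        ⟨fun a b h => Disjoint.symm h⟩
      exact Multiset.disjoint_left.1 (h₃.forall (hA' e') (hA' e) hne)
        (List.mem_of_getElem? hq) (List.mem_of_getElem? hp)
    subst he
    have hi := List.getElem?_inj (List.getElem?_eq_some_iff.1 hp).1 (h₂ e') |>.1 (hp.trans hq.symm)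
    exact Prod.ext rfl hi.symm
  · rintro ⟨hI, h₂, h₃⟩
    have huniq : ∀ {p q : E × ℕ} {v}, (τ p.1)[p.2]? = some v → (τ q.1)[q.2]? = some v → p = q := by
      intro p q v hp hq
      by_cases hv : ∃ i, I i = v
      · exact absurd hp (h₂ v hv p)
      · exact (h₃ v hv).unique hp hq
    refine ⟨⟨hI, ⟨fun e => ?_, ?_⟩, fun {v} hv ⟨p, hp⟩ => h₂ v hv p hp⟩, fun v => ?_⟩
    · rw [Multiset.coe_nodup, List.nodup_iff_injective_getElem]
      intro i j hij
      have := huniq (p := (e, i)) (q := (e, j)) (List.getElem?_eq_getElem i.2)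
        ((List.getElem?_eq_getElem j.2).trans (congrArg some hij.symm))
      exact Fin.ext (congrArg Prod.snd this)
    · refine Multiset.Nodup.pairwise (fun e _ e' _ hne => ?_) hA
      refine Multiset.disjoint_left.2 fun {v} hv hv' => hne ?_
      obtain ⟨i, hi⟩ := List.mem_iff_getElem?.1 (Multiset.mem_coe.1 hv)
      obtain ⟨j, hj⟩ := List.mem_iff_getElem?.1 (Multiset.mem_coe.1 hv')
      exact congrArg Prod.fst (huniq (p := (e, i)) (q := (e', j)) hi hj)
    · by_cases hv : ∃ i, I i = v
      · exact .inl hv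
      · exact .inr (h₃ v hv).exists

end

section

variable {S : MonSig}
open Mor

theorem LHom.ext {G H : LHyp S} {f g : LHom G H} (h : f.nodeMap = g.nodeMap)
    (h' : f.edgeMap = g.edgeMap) : f = g := by
  cases f
  cases g
  congr

theorem LHom.ext_discrete {I : Type} {H : LHyp S} {f g : LHom (discreteLHyp S I) H}
    (h : f.nodeMap = g.nodeMap) : f = g :=
  LHom.ext h (funext fun e => e.elim)

section Gluing

variable {i j : Type} {L : LCospan S i j} {C D : LHyp S} {c : i ⊕ j → C.V} {f : LHom L.G D}
  {g : LHom C D} {B : Multiset C.V} {T : Multiset L.G.V}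

/-- Every node of the two parts of a gluing is identified with one which belongs to `B` or `T`. -/
theorem exists_canonical (hC : ∀ b, b ∈ B ∨ ∃ y, b = c (.inr y))
    (hL : ∀ a, a ∈ T ∨ ∃ x, a = L.inp x) (hc : ∀ x, c (.inl x) ∈ B) (z : C.V ⊕ L.G.V) :
    ∃ z' ∈ (B.map Sum.inl + T.map Sum.inr : Multiset (C.V ⊕ L.G.V)),
      ∀ (W : LHyp S) (u : LHom L.G W) (w : LHom C W),
        (∀ x, u.nodeMap (Sum.elim L.inp L.out x) = w.nodeMap (c x)) →
          Sum.elim w.nodeMap u.nodeMap z = Sum.elim w.nodeMap u.nodeMap z' := by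
  have hL' : ∀ a : L.G.V, ∃ z' ∈ (B.map Sum.inl + T.map Sum.inr : Multiset (C.V ⊕ L.G.V)),
      ∀ (W : LHyp S) (u : LHom L.G W) (w : LHom C W),
        (∀ x, u.nodeMap (Sum.elim L.inp L.out x) = w.nodeMap (c x)) →
          u.nodeMap a = Sum.elim w.nodeMap u.nodeMap z' := fun a => by
    rcases hL a with h | ⟨x, rfl⟩
    · exact ⟨.inr a, by simp [h], fun _ _ _ _ => rfl⟩
    · exact ⟨.inl (c (.inl x)), by simp [hc], fun W u w h => h (.inl x)⟩
  rcases z with b | a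
  · rcases hC b with h | ⟨y, rfl⟩
    · exact ⟨.inl b, by simp [h], fun _ _ _ _ => rfl⟩
    · obtain ⟨z', hz', h⟩ := hL' (L.out y)
      exact ⟨z', hz', fun W u w hw => (hw (.inr y)).symm.trans (h W u w hw)⟩
  · exact hL' a

theorem injOn_canonical (hN : (B.map g.nodeMap + T.map f.nodeMap).Nodup)
    {z z' : C.V ⊕ L.G.V} (hz : z ∈ (B.map Sum.inl + T.map Sum.inr : Multiset (C.V ⊕ L.G.V)))
    (hz' : z' ∈ (B.map Sum.inl + T.map Sum.inr : Multiset (C.V ⊕ L.G.V)))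
    (h : Sum.elim g.nodeMap f.nodeMap z = Sum.elim g.nodeMap f.nodeMap z') : z = z' := by
  refine Multiset.inj_on_of_nodup_map (f := Sum.elim g.nodeMap f.nodeMap) ?_ z hz z' hz' h
  simpa using hN

theorem isPushout_of_nodup (h₀ : ∀ x, f.nodeMap (Sum.elim L.inp L.out x) = g.nodeMap (c x))
    (hE : Function.Bijective (Sum.elim f.edgeMap g.edgeMap))
    (hN : (B.map g.nodeMap + T.map f.nodeMap).Nodup)
    (hD : ∀ v, v ∈ B.map g.nodeMap + T.map f.nodeMap)
    (hC : ∀ b, b ∈ B ∨ ∃ y, b = c (.inr y)) (hL : ∀ a, a ∈ T ∨ ∃ x, a = L.inp x)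
    (hc : ∀ x, c (.inl x) ∈ B) :
    IsPushout (discreteHom L.G (Sum.elim L.inp L.out)) (discreteHom C c) f g := by
  refine ⟨LHom.ext_discrete (funext h₀), fun W u w h => ?_⟩
  replace h : ∀ x, u.nodeMap (Sum.elim L.inp L.out x) = w.nodeMap (c x) := fun x =>
    congrFun (congrArg LHom.nodeMap h) x
  have hker : ∀ z z', Sum.elim g.nodeMap f.nodeMap z = Sum.elim g.nodeMap f.nodeMap z' →
      Sum.elim w.nodeMap u.nodeMap z = Sum.elim w.nodeMap u.nodeMap z' := fun z z' hz => by
    obtain ⟨a, ha, ha'⟩ := exists_canonical hC hL hc z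
    obtain ⟨b, hb, hb'⟩ := exists_canonical hC hL hc z'
    rw [ha' W u w h, hb' W u w h]
    rw [ha' D f g h₀, hb' D f g h₀] at hz
    rw [injOn_canonical hN ha hb hz]
  have hsurj : ∀ v, ∃ z, Sum.elim g.nodeMap f.nodeMap z = v := fun v => by
    rcases Multiset.mem_add.1 (hD v) with hv | hv
    · obtain ⟨b, -, hb⟩ := Multiset.mem_map.1 hv
      exact ⟨.inl b, hb⟩
    · obtain ⟨a, -, ha⟩ := Multiset.mem_map.1 hv
      exact ⟨.inr a, ha⟩
  choose σ hσ using hsurj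
  let ε := Equiv.ofBijective _ hE
  have hεf : ∀ e, ε.symm (f.edgeMap e) = .inl e := fun e => ε.symm_apply_apply (.inl e)
  have hεg : ∀ e, ε.symm (g.edgeMap e) = .inr e := fun e => ε.symm_apply_apply (.inr e)
  let τ : D.V → W.V := fun v => Sum.elim w.nodeMap u.nodeMap (σ v)
  have hτf : ∀ a, τ (f.nodeMap a) = u.nodeMap a := fun a => hker _ (.inr a) (hσ _)
  have hτg : ∀ b, τ (g.nodeMap b) = w.nodeMap b := fun b => hker _ (.inl b) (hσ _)
  let t : LHom D W :=
    { nodeMap := τ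
      edgeMap := fun e => Sum.elim u.edgeMap w.edgeMap (ε.symm e)
      src_eq := fun e => by
        obtain ⟨e | e, rfl⟩ := ε.surjective e
        · simp [ε, f.src_eq, u.src_eq, hτf, hεf]
        · simp [ε, g.src_eq, w.src_eq, hτg, hεg]
      tgt_eq := fun e => by
        obtain ⟨e | e, rfl⟩ := ε.surjective e
        · simp [ε, f.tgt_eq, u.tgt_eq, hτf, hεf]
        · simp [ε, g.tgt_eq, w.tgt_eq, hτg, hεg]
      label_eq := fun e => by
        obtain ⟨e | e, rfl⟩ := ε.surjective e
        · simp [ε, f.label_eq, u.label_eq, hεf]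
        · simp [ε, g.label_eq, w.label_eq, hεg] }
  refine ⟨t, ⟨LHom.ext (funext hτf) (funext fun e => ?_),
    LHom.ext (funext hτg) (funext fun e => ?_)⟩, ?_⟩
  · exact congrArg (Sum.elim u.edgeMap w.edgeMap) (hεf e)
  · exact congrArg (Sum.elim u.edgeMap w.edgeMap) (hεg e)
  · rintro s ⟨rfl, rfl⟩
    refine LHom.ext (funext fun v => ?_) (funext fun e => ?_)
    · rw [← hσ v]
      rcases σ v with b | a
      · exact (hτg b).symm
      · exact (hτf a).symm
    · obtain ⟨e | e, rfl⟩ := ε.surjective e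
      · exact (congrArg (Sum.elim (s.edgeMap ∘ f.edgeMap) (s.edgeMap ∘ g.edgeMap)) (hεf e)).symm
      · exact (congrArg (Sum.elim (s.edgeMap ∘ f.edgeMap) (s.edgeMap ∘ g.edgeMap)) (hεg e)).symm

theorem injective_of_nodup (h₀ : ∀ x, f.nodeMap (Sum.elim L.inp L.out x) = g.nodeMap (c x))
    (hN : (B.map g.nodeMap + T.map f.nodeMap).Nodup) (hL : ∀ a, a ∈ T ∨ ∃ x, a = L.inp x)
    (hc : ∀ x, c (.inl x) ∈ B) (hinj : Function.Injective c) :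
    Function.Injective f.nodeMap := by
  have key : ∀ a ∈ T, ∀ x, f.nodeMap a ≠ f.nodeMap (L.inp x) := fun a ha x h => by
    have := injOn_canonical hN (z := .inr a) (z' := .inl (c (.inl x))) (by simp [ha])
      (by simp [hc]) (h.trans (h₀ (.inl x)))
    simp at this
  intro a a' h
  rcases hL a with ha | ⟨x, rfl⟩ <;> rcases hL a' with ha' | ⟨x', rfl⟩
  · have := injOn_canonical hN (z := .inr a) (z' := .inr a') (by simp [ha]) (by simp [ha']) h
    simpa using this
  · exact absurd h (key a ha x')
  · exact absurd h.symm (key a' ha' x)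
  · have := injOn_canonical hN (z := .inl (c (.inl x))) (z' := .inl (c (.inl x'))) (by simp [hc])
      (by simp [hc]) ((h₀ (.inl x)).symm.trans (h.trans (h₀ (.inl x'))))
    rw [Sum.inl_injective (hinj (Sum.inl_injective this))]

end Gluing

end

section

variable {S : MonSig}
open Mor

namespace LHyp

/-- The sources of a collection of hyperedges. -/
abbrev srcs (G : LHyp S) (A : Multiset G.E) : Multiset G.V :=
  A.bind fun e => (G.src e : Multiset G.V)

/-- The targets of a collection of hyperedges. -/
abbrev tgts (G : LHyp S) (A : Multiset G.E) : Multiset G.V :=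
  A.bind fun e => (G.tgt e : Multiset G.V)

variable {G : LHyp S}

theorem srcs_add (A B : Multiset G.E) : G.srcs (A + B) = G.srcs A + G.srcs B :=
  Multiset.add_bind _ _ _

theorem tgts_add (A B : Multiset G.E) : G.tgts (A + B) = G.tgts A + G.tgts B :=
  Multiset.add_bind _ _ _

theorem mem_srcs {A : Multiset G.E} {e : G.E} (he : e ∈ A) {v : G.V} (hv : v ∈ G.src e) :
    v ∈ G.srcs A :=
  Multiset.mem_bind.2 ⟨e, he, hv⟩

theorem mem_tgts {A : Multiset G.E} {e : G.E} (he : e ∈ A) {v : G.V} (hv : v ∈ G.tgt e) :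
    v ∈ G.tgts A :=
  Multiset.mem_bind.2 ⟨e, he, hv⟩

end LHyp

/-- The image of `f` is convex if the remaining hyperedges fall into those in `A₁`, which do not
consume anything produced by the others, and those in `A₂`, which do not produce anything
consumed by the others. -/
theorem convex_image {L D : LHyp S} (f : LHom L D) (A₁ A₂ : Multiset D.E) (X : Multiset D.V)
    (hE : ∀ e, e ∈ A₁ ∨ e ∈ Set.range f.edgeMap ∨ e ∈ A₂) (hX : ∀ a, f.nodeMap a ∈ X)
    (h₁ : Disjoint (D.srcs A₁) X) (h₂ : Disjoint X (D.tgts A₂))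
    (h₃ : Disjoint (D.srcs A₁) (D.tgts A₂)) : f.toHypHom.image.Convex := by
  have hsrc : ∀ e ∈ Set.range f.edgeMap, ∀ v ∈ D.src e, v ∈ X := by
    rintro _ ⟨e, rfl⟩ v hv
    rw [f.src_eq] at hv
    obtain ⟨a, -, rfl⟩ := List.mem_map.1 hv
    exact hX a
  have htgt : ∀ e ∈ Set.range f.edgeMap, ∀ v ∈ D.tgt e, v ∈ X := by
    rintro _ ⟨e, rfl⟩ v hv
    rw [f.tgt_eq] at hv
    obtain ⟨a, -, rfl⟩ := List.mem_map.1 hv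
    exact hX a
  rintro _ ⟨a, rfl⟩ _ ⟨a', rfl⟩ p ⟨hne, hp, ha, ha'⟩ e he
  have k₁ : e ∉ A₁ := by
    refine List.IsChain.induction (· ∉ A₁) p hp ?_ (fun _ h => ?_) e he
    · rintro x y ⟨v, hv, hv'⟩ hx hy
      rcases (hE x).resolve_left hx with hx | hx
      · exact Multiset.disjoint_left.1 h₁ (LHyp.mem_srcs hy hv') (htgt x hx v hv)
      · exact Multiset.disjoint_left.1 h₃ (LHyp.mem_srcs hy hv') (LHyp.mem_tgts hx hv)
    · exact Multiset.disjoint_left.1 h₁ (LHyp.mem_srcs h ha) (hX a)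
  have k₂ : e ∉ A₂ := by
    refine List.IsChain.backwards_induction (· ∉ A₂) p hp ?_ (fun _ h => ?_) e he
    · rintro x y ⟨v, hv, hv'⟩ hy hx
      rcases or_assoc.2 (hE y) with (hy' | hy') | hy'
      · exact Multiset.disjoint_left.1 h₃ (LHyp.mem_srcs hy' hv') (LHyp.mem_tgts hx hv)
      · exact Multiset.disjoint_left.1 h₂ (hsrc y hy' v hv') (LHyp.mem_tgts hx hv)
      · exact hy hy'
    · exact Multiset.disjoint_left.1 h₂ (hX a') (LHyp.mem_tgts h ha')
  exact ((hE e).resolve_left k₁).resolve_right k₂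

theorem nodup_ofFn_out {m n : ℕ} (t : Term S m n) : (List.ofFn (interp t).out).Nodup := by
  have h := nodup_nodes t
  rw [nodes_eq] at h
  exact (Multiset.nodup_add.1 h).2.1

theorem monogamous_interp {m n : ℕ} (t : Term S m n) : (interp t).Monogamous := by
  have h₁ := (nodup_and_forall_mem_iff (interp t).inp (interp t).G.tgt (nodup_edges t)
    (mem_edges t)).1 (by
      rw [Fin.univ_val_map]
      exact ⟨nodup_nodes t, mem_nodes t⟩)
  have h₂ := (nodup_and_forall_mem_iff (interp t).out (interp t).G.src (nodup_edges t)
    (mem_edges t)).1 (by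
      rw [Fin.univ_val_map, add_comm, ← nodes_eq]
      exact ⟨nodup_nodes t, mem_nodes t⟩)
  exact ⟨h₁.1, h₂.1, h₁.2.1, h₁.2.2, h₂.2.1, h₂.2.2⟩

theorem LCospan.Monogamous.reind {m n m' n' : Type} {A : LCospan S m n} (h : A.Monogamous)
    (e : m' ≃ m) (e' : n' ≃ n) : (A.reind e e').Monogamous := by
  obtain ⟨h₁, h₂, h₃, h₄, h₅, h₆⟩ := h
  have k : Set.range (A.inp ∘ e) = Set.range A.inp := EquivLike.range_comp _ _
  have k' : Set.range (A.out ∘ e') = Set.range A.out := EquivLike.range_comp _ _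
  refine ⟨h₁.comp e.injective, h₂.comp e'.injective, fun v hv => h₃ v ?_, fun v hv => h₄ v ?_,
    fun v hv => h₅ v ?_, fun v hv => h₆ v ?_⟩
  · exact k ▸ hv
  · exact fun h => hv (k.symm ▸ h)
  · exact k' ▸ hv
  · exact fun h => hv (k'.symm ▸ h)

section Context

variable {n m i j k : ℕ}

/-- The context consisting of `c₁` and `c₂`, as a term with the ports of the hole moved to the
interfaces. -/
def context (c₁ : Term S n (k + i)) (c₂ : Term S (k + j) m) : Term S (j + n) (m + i) :=
  ((Term.id j).par c₁).seq
    ((castTerm (Nat.add_assoc j k i) rfl ((Term.symm j k).par (Term.id i))).seq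
      (c₂.par (Term.id i)))

theorem TRuns.context {G : LHyp S} {c₁ : Term S n (k + i)} {c₂ : Term S (k + j) m}
    {v K I J w A₁ A₂} (h₁ : TRuns G c₁ v A₁ (K ++ I)) (h₂ : TRuns G c₂ (K ++ J) A₂ w)
    (hK : K.length = k) (hI : I.length = i) (hJ : J.length = j) :
    TRuns G (context c₁ c₂) (J ++ v) (A₁ + A₂) (w ++ I) := by
  refine ⟨_, _, _, h₁.id_append J hJ, ⟨K ++ J ++ I, 0, A₂, ?_, h₂.append_id I hI, (zero_add _).symm⟩,
    rfl⟩
  rw [TRuns.cast_iff, ← List.append_assoc]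
  have h : TRuns G (Term.symm j k) (J ++ K) 0 (K ++ J) := ⟨J, K, hJ, hK, rfl, rfl, rfl⟩
  exact h.append_id I hI

theorem TRuns.exists_of_context {G : LHyp S} {c₁ : Term S n (k + i)} {c₂ : Term S (k + j) m}
    {v w A} (h : TRuns G (SDRT.context c₁ c₂) v A w) :
    ∃ J N K I M A₁ A₂, v = J ++ N ∧ w = M ++ I ∧ A = A₁ + A₂ ∧ J.length = j ∧ K.length = k ∧
      I.length = i ∧ TRuns G c₁ N A₁ (K ++ I) ∧ TRuns G c₂ (K ++ J) A₂ M := by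
  obtain ⟨_, _, _, ⟨_, _, _, _, _, _, ⟨h₁, rfl, rfl⟩, h₂, rfl, rfl, rfl⟩, ⟨_, _, _, h₃,
    ⟨_, _, _, _, _, _, h₄, ⟨h₅, rfl, rfl⟩, rfl, rfl, rfl⟩, rfl⟩, rfl⟩ := h
  rw [TRuns.cast_iff] at h₃
  obtain ⟨_, _, _, _, _, _, ⟨J, K, hJ, hK, rfl, rfl, rfl⟩, ⟨h₆, rfl, rfl⟩, h₇, rfl, h₈⟩ := h₃
  rw [List.append_assoc] at h₇
  obtain ⟨rfl, rfl⟩ := List.append_inj h₇ (h₁.trans hJ.symm)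
  obtain ⟨rfl, rfl⟩ := List.append_inj' h₈ (h₅.trans h₆.symm)
  exact ⟨_, _, _, _, _, _, _, rfl, rfl, by simp, hJ, hK, h₅, h₂, h₄⟩

end Context

end

section

variable {S : MonSig}
open Mor

variable {n m i j k : ℕ}

/-- The ports of the hole of a context. -/
def hole (c₁ : Term S n (k + i)) (c₂ : Term S (k + j) m) :
    Fin i ⊕ Fin j → (interp (context c₁ c₂)).G.V :=
  Sum.elim (fun x => (interp (context c₁ c₂)).out (Fin.natAdd m x))
    (fun y => (interp (context c₁ c₂)).inp (Fin.castAdd n y))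

/-- The ports of a context other than those of the hole. -/
def boundary (c₁ : Term S n (k + i)) (c₂ : Term S (k + j) m) :
    Fin n ⊕ Fin m → (interp (context c₁ c₂)).G.V :=
  Sum.elim (fun x => (interp (context c₁ c₂)).inp (Fin.natAdd j x))
    (fun y => (interp (context c₁ c₂)).out (Fin.castAdd i y))

/-- The nodes of a context other than those consumed outside of it. -/
def contextNodes (c₁ : Term S n (k + i)) (c₂ : Term S (k + j) m) :
    Multiset (interp (context c₁ c₂)).G.V :=
  (List.ofFn (boundary c₁ c₂ ∘ Sum.inl) : Multiset _) +
    (interp (context c₁ c₂)).G.tgts (edges (context c₁ c₂))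

variable (c₁ : Term S n (k + i)) (c₂ : Term S (k + j) m)

theorem ofFn_inp_context : List.ofFn (interp (context c₁ c₂)).inp =
    List.ofFn (hole c₁ c₂ ∘ Sum.inr) ++ List.ofFn (boundary c₁ c₂ ∘ Sum.inl) :=
  ofFn_fin_add _

theorem ofFn_out_context : List.ofFn (interp (context c₁ c₂)).out =
    List.ofFn (boundary c₁ c₂ ∘ Sum.inr) ++ List.ofFn (hole c₁ c₂ ∘ Sum.inl) :=
  ofFn_fin_add _

theorem nodes_context : nodes (context c₁ c₂) =
    (List.ofFn (hole c₁ c₂ ∘ Sum.inr) : Multiset _) + contextNodes c₁ c₂ := by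
  rw [contextNodes, ← add_assoc, Multiset.coe_add, ← ofFn_inp_context]
  rfl

theorem hole_inl_mem (x : Fin i) : hole c₁ c₂ (.inl x) ∈ contextNodes c₁ c₂ := by
  obtain ⟨J, N, K, I, M, A₁, A₂, hv, hw, hA, hJ, hK, hI, h₁, h₂⟩ :=
    TRuns.exists_of_context (tRuns_interp (context c₁ c₂))
  rw [ofFn_inp_context] at hv
  rw [ofFn_out_context] at hw
  obtain ⟨rfl, rfl⟩ := List.append_inj hv (by simp [hJ])
  obtain ⟨rfl, rfl⟩ := List.append_inj' hw (by simp [hI])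
  have h := h₁.runs.conservation
  have hx : hole c₁ c₂ (.inl x) ∈ (K ++ List.ofFn (hole c₁ c₂ ∘ Sum.inl) : Multiset _) :=
    Multiset.mem_coe.2 (List.mem_append_right _ (List.mem_ofFn.2 ⟨x, rfl⟩))
  rw [contextNodes, hA, LHyp.tgts_add, ← add_assoc]
  refine Multiset.mem_add.2 (.inl ?_)
  rw [h]
  exact Multiset.mem_add.2 (.inr hx)

theorem hole_injective : Function.Injective (hole c₁ c₂) := by
  have h := nodup_nodes (context c₁ c₂)
  rw [nodes_context] at h
  obtain ⟨h₁, -, h₂⟩ := Multiset.nodup_add.1 h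
  have h₃ := nodup_ofFn_out (context c₁ c₂)
  rw [ofFn_out_context] at h₃
  have key : ∀ x y, hole c₁ c₂ (.inl x) ≠ hole c₁ c₂ (.inr y) := fun x y h =>
    Multiset.disjoint_left.1 h₂ (Multiset.mem_coe.2 (List.mem_ofFn.2 ⟨y, h.symm⟩))
      (hole_inl_mem c₁ c₂ x)
  rintro (x | y) (x' | y') h
  · exact congrArg Sum.inl (List.nodup_ofFn.1 h₃.of_append_right h)
  · exact absurd h (key x y')
  · exact absurd h.symm (key x' y)
  · exact congrArg Sum.inr (List.nodup_ofFn.1 (Multiset.coe_nodup.1 h₁) h)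

theorem monogamous_context :
    (LCospan.mk (interp (context c₁ c₂)).G
      (Sum.elim (fun y => hole c₁ c₂ (.inr y)) (fun x => boundary c₁ c₂ (.inl x)))
      (Sum.elim (fun y => boundary c₁ c₂ (.inr y)) (fun x => hole c₁ c₂ (.inl x)))).Monogamous := by
  have h := (monogamous_interp (context c₁ c₂)).reind finSumFinEquiv finSumFinEquiv
  have e₁ : Sum.elim (fun y => hole c₁ c₂ (.inr y)) (fun x => boundary c₁ c₂ (.inl x)) =
      (interp (context c₁ c₂)).inp ∘ finSumFinEquiv := by
    funext z
    rcases z with z | z <;> rfl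
  have e₂ : Sum.elim (fun y => boundary c₁ c₂ (.inr y)) (fun x => hole c₁ c₂ (.inl x)) =
      (interp (context c₁ c₂)).out ∘ finSumFinEquiv := by
    funext z
    rcases z with z | z <;> rfl
  rw [e₁, e₂]
  exact h

variable {c₁ c₂}

/-- The interpretation of a term of the form `c₁ ; (id ⊕ l) ; c₂` is a gluing of the
interpretation of `l` into the context. -/
theorem exists_isPushout {d : Term S n m} {l : Term S i j}
    (h : SMC S d (c₁.seq (((Term.id k).par l).seq c₂))) :
    ∃ (f : LHom (interp l).G (interp d).G) (g : LHom (interp (context c₁ c₂)).G (interp d).G),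
      Function.Injective f.nodeMap ∧ Function.Injective f.edgeMap ∧
      f.toHypHom.image.Convex ∧
      IsPushout (discreteHom (interp l).G (Sum.elim (interp l).inp (interp l).out))
        (discreteHom (interp (context c₁ c₂)).G (hole c₁ c₂)) f g ∧
      (∀ x, g.nodeMap (boundary c₁ c₂ (.inl x)) = (interp d).inp x) ∧
      ∀ y, g.nodeMap (boundary c₁ c₂ (.inr y)) = (interp d).out y := by
  obtain ⟨_, A₁, _, h₁, ⟨_, A, A₂, ⟨_, I, _, _, K, J, ⟨hK, rfl, rfl⟩, h₂, rfl, rfl, rfl⟩, h₃, rfl⟩,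
    hA⟩ := (TRuns.congr h _ _ _).1 (tRuns_interp d)
  rw [zero_add] at hA
  have hI := h₂.length_left
  have hJ := h₂.length_right
  obtain ⟨f, rfl, rfl, rfl⟩ := h₂.exists_hom
  obtain ⟨g, hgi, hgA, hgo⟩ := (h₁.context h₃ hK hI hJ).exists_hom
  rw [← List.map_ofFn (f := (interp (context c₁ c₂)).inp), ofFn_inp_context, List.map_append] at hgi
  rw [← List.map_ofFn (f := (interp (context c₁ c₂)).out), ofFn_out_context, List.map_append] at hgo
  obtain ⟨hg₁, hg₂⟩ := List.append_inj hgi (by simp)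
  obtain ⟨hg₃, hg₄⟩ := List.append_inj hgo (by simp)
  rw [List.map_ofFn] at hg₁ hg₂ hg₃ hg₄
  have h₀ : ∀ x, f.nodeMap (Sum.elim (interp l).inp (interp l).out x) =
      g.nodeMap (hole c₁ c₂ x) := by
    rintro (x | x)
    · exact congrFun (List.ofFn_injective hg₄) x
    · exact congrFun (List.ofFn_injective hg₁) x
  have hE : edges d = (edges l).map f.edgeMap + (edges (context c₁ c₂)).map g.edgeMap := by
    rw [← hgA, hA]
    abel
  have hEn := nodup_edges d
  rw [hE] at hEn
  have hEc := mem_edges d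
  rw [hE] at hEc
  have hbij : Function.Bijective (Sum.elim f.edgeMap g.edgeMap) := by
    constructor
    · have hM : ∀ z, z ∈ ((edges l).map Sum.inl + (edges (context c₁ c₂)).map Sum.inr :
          Multiset ((interp l).G.E ⊕ (interp (context c₁ c₂)).G.E)) := by
        rintro (e | e) <;> simp [mem_edges]
      intro z z' hz
      refine Multiset.inj_on_of_nodup_map (f := Sum.elim f.edgeMap g.edgeMap) ?_ z (hM z) z'
        (hM z') hz
      simpa using hEn
    · intro e
      rcases Multiset.mem_add.1 (hEc e) with he | he
      · obtain ⟨e, -, rfl⟩ := Multiset.mem_map.1 he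
        exact ⟨.inl e, rfl⟩
      · obtain ⟨e, -, rfl⟩ := Multiset.mem_map.1 he
        exact ⟨.inr e, rfl⟩
  have hN : nodes d = (contextNodes c₁ c₂).map g.nodeMap +
      ((interp l).G.tgts (edges l)).map f.nodeMap := by
    rw [contextNodes, Multiset.map_add, Multiset.map_coe, List.map_ofFn, ← hg₂,
      ← LCospan.bind_tgt_map, ← LCospan.bind_tgt_map, add_assoc, ← Multiset.add_bind,
      add_comm (Multiset.map g.edgeMap _), ← hE]
    rfl
  have hNn := nodup_nodes d
  have hNc := mem_nodes d
  have hL : ∀ a, a ∈ (interp l).G.tgts (edges l) ∨ ∃ x, a = (interp l).inp x := fun a => by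
    rcases Multiset.mem_add.1 (mem_nodes l a) with ha | ha
    · obtain ⟨x, rfl⟩ := List.mem_ofFn.1 (Multiset.mem_coe.1 ha)
      exact .inr ⟨x, rfl⟩
    · exact .inl ha
  have hC : ∀ b, b ∈ contextNodes c₁ c₂ ∨ ∃ y, b = hole c₁ c₂ (.inr y) := fun b => by
    have hb := mem_nodes (context c₁ c₂) b
    rw [nodes_context] at hb
    rcases Multiset.mem_add.1 hb with hb | hb
    · obtain ⟨x, rfl⟩ := List.mem_ofFn.1 (Multiset.mem_coe.1 hb)
      exact .inr ⟨x, rfl⟩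
    · exact .inl hb
  have hfE : Function.Injective f.edgeMap := hbij.1.comp Sum.inl_injective
  refine ⟨f, g, injective_of_nodup h₀ (hN ▸ hNn) hL (hole_inl_mem c₁ c₂) (hole_injective c₁ c₂),
    hfE, ?_, isPushout_of_nodup h₀ hbij (hN ▸ hNn) (hN ▸ hNc) hC hL
    (hole_inl_mem c₁ c₂), fun x => ?_, fun x => ?_⟩
  · have k₁ := h₁.runs.conservation
    have k₂ : nodes d = (interp d).G.srcs A₁ + K + (nodes l).map f.nodeMap +
        (interp d).G.tgts A₂ := by
      rw [nodes, nodes, LCospan.produced, LCospan.produced, hA, Multiset.add_bind,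
        Multiset.add_bind, ← add_assoc, k₁, Multiset.map_add, ← LCospan.bind_tgt_map,
        Multiset.map_coe, List.map_ofFn, ← Multiset.coe_add]
      simp only [add_assoc]
    rw [k₂, Multiset.nodup_add, Multiset.nodup_add, Multiset.nodup_add] at hNn
    obtain ⟨⟨⟨-, -, -⟩, -, k₃⟩, -, k₄⟩ := hNn
    rw [Multiset.disjoint_add_left] at k₃ k₄
    rw [Multiset.disjoint_add_left] at k₄
    refine convex_image f A₁ A₂ _ (fun e => ?_)
      (fun a => Multiset.mem_map_of_mem _ (mem_nodes l a)) k₃.1 k₄.2 k₄.1.1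
    have he := mem_edges d e
    rw [hA, Multiset.mem_add, Multiset.mem_add] at he
    exact he.imp_right (Or.imp_left fun he => let ⟨e, _, h⟩ := Multiset.mem_map.1 he; ⟨e, h⟩)
  · exact (congrFun (List.ofFn_injective hg₂) x).symm
  · exact (congrFun (List.ofFn_injective hg₃) x).symm

end

section

variable {S : MonSig}
open Mor

section Forward

variable {n m i j k : ℕ}

theorem convexStep_of_smc {c₁ : Term S n (k + i)} {c₂ : Term S (k + j) m} {d e : Term S n m}
    {l r : Term S i j} (hd : SMC S d (c₁.seq (((Term.id k).par l).seq c₂)))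
    (he : SMC S e (c₁.seq (((Term.id k).par r).seq c₂))) :
    ConvexStep (interp l) (interp r) (interp d) (interp e) := by
  obtain ⟨f, g, hf, hf', hconv, hp, hi, ho⟩ := exists_isPushout hd
  obtain ⟨f', g', -, -, -, hp', hi', ho'⟩ := exists_isPushout he
  exact ⟨f, _, hole c₁ c₂, boundary c₁ c₂, g, f', g', hf, hf', hconv, hp, hp', hi, ho, hi', ho',
    hole_injective c₁ c₂, monogamous_context c₁ c₂⟩

end Forward

/-- The hypergraph with a single node and the given labelled hyperedges. -/
def bouquet {E : Type} (lab : E → S.ops) : LHyp S where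
  V := Unit
  E := E
  src e := List.replicate (S.ar (lab e)) ()
  tgt e := List.replicate (S.coar (lab e)) ()
  label := lab
  src_len e := by simp
  tgt_len e := by simp

/-- The homomorphism to a bouquet given by a label-preserving map of hyperedges. -/
def LHom.toBouquet {G : LHyp S} {E : Type} {lab : E → S.ops} (φ : G.E → E)
    (h : ∀ e, lab (φ e) = G.label e) : LHom G (bouquet lab) where
  nodeMap _ := ()
  edgeMap := φ
  src_eq e := by simp [bouquet, h, ← G.src_len, List.map_const']
  tgt_eq e := by simp [bouquet, h, ← G.tgt_len, List.map_const']
  label_eq := h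

theorem IsPushout.bijective_edgeMap {I : Type} {A B P : LHyp S} {a : I → A.V} {b : I → B.V}
    {f : LHom A P} {g : LHom B P} (h : IsPushout (discreteHom A a) (discreteHom B b) f g) :
    Function.Bijective (Sum.elim f.edgeMap g.edgeMap) := by
  obtain ⟨-, h⟩ := h
  constructor
  · obtain ⟨t, ⟨ht, ht'⟩, -⟩ := h (bouquet (Sum.elim A.label B.label))
      (LHom.toBouquet Sum.inl fun _ => rfl) (LHom.toBouquet Sum.inr fun _ => rfl)
      (LHom.ext_discrete rfl)
    refine Function.LeftInverse.injective (g := t.edgeMap) ?_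
    rintro (e | e)
    · exact congrFun (congrArg LHom.edgeMap ht) e
    · exact congrFun (congrArg LHom.edgeMap ht') e
  · let lab : P.E × Prop → S.ops := fun e => P.label e.1
    let t₁ : LHom P (bouquet lab) := LHom.toBouquet (fun e => (e, True)) fun _ => rfl
    let t₂ : LHom P (bouquet lab) :=
      LHom.toBouquet (fun e => (e, e ∈ Set.range (Sum.elim f.edgeMap g.edgeMap))) fun _ => rfl
    have key := (h (bouquet lab) (f.comp t₁) (g.comp t₁) (LHom.ext_discrete rfl)).unique
      ⟨rfl, rfl⟩ (y₂ := t₂) ⟨LHom.ext rfl (funext fun e => ?_), LHom.ext rfl (funext fun e => ?_)⟩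
    · intro e
      have := congrArg Prod.snd (congrFun (congrArg LHom.edgeMap key) e)
      exact this.mp trivial
    · exact congrArg (Prod.mk (f.edgeMap e)) (eq_true ⟨.inl e, rfl⟩)
    · exact congrArg (Prod.mk (g.edgeMap e)) (eq_true ⟨.inr e, rfl⟩)

theorem nodup_le_of_forall_mem {α : Type*} {s t : Multiset α} (hs : s.Nodup)
    (h : ∀ a ∈ s, a ∈ t) : s ≤ t :=
  (Multiset.le_iff_subset hs).2 h

/-- A collection of ranked hyperedges whose sources are available admits a run. -/
theorem Runs.exists_of_rank {G : LHyp S} {w : List G.V} {A : Multiset G.E}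
    (hn : ((w : Multiset G.V) + G.tgts A).Nodup) (hle : G.srcs A ≤ w + G.tgts A)
    (rank : G.E → ℕ)
    (hrank : ∀ e ∈ A, ∀ e' ∈ A, (∃ v, v ∈ G.tgt e ∧ v ∈ G.src e') → rank e < rank e') :
    ∃ x w', Runs G w x A w' := by
  induction h : A.card generalizing A w with
  | zero =>
    obtain rfl := Multiset.card_eq_zero.1 h
    exact ⟨_, _, .id w⟩
  | succ a ih =>
    have hne : A ≠ 0 := fun h0 => by simp [h0] at h
    obtain ⟨e, he, hmin⟩ := Set.exists_min_image {e | e ∈ A} rank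
      (by classical exact (A.toFinset.finite_toSet).subset fun e he => by simpa using he)
      (Multiset.exists_mem_of_ne_zero hne)
    obtain ⟨B, rfl⟩ := Multiset.exists_cons_of_mem he
    have hs : (G.src e : Multiset G.V) ≤ w := by
      have hs' : (G.src e : Multiset G.V) ≤ w + G.tgts (e ::ₘ B) := by
        refine le_trans ?_ hle
        simp [LHyp.srcs]
      refine nodup_le_of_forall_mem (Multiset.nodup_of_le hs' hn) fun v hv => ?_
      refine (Multiset.mem_add.1 (Multiset.mem_of_le hs' hv)).resolve_right fun hv' => ?_
      obtain ⟨e', he', hv'⟩ := Multiset.mem_bind.1 hv'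
      exact absurd (hrank e' he' e he ⟨v, hv', hv⟩) (hmin e' he').not_gt
    obtain ⟨r, hr⟩ := Multiset.le_iff_exists_add.1 hs
    induction r using Quotient.inductionOn with | h r => ?_
    have hw : w.Perm (G.src e ++ r) := Multiset.coe_eq_coe.1 hr
    have key : (w : Multiset G.V) + G.tgts (e ::ₘ B) =
        G.src e + (((G.tgt e ++ r : List G.V) : Multiset G.V) + G.tgts B) := by
      rw [Multiset.coe_eq_coe.2 hw, LHyp.tgts, Multiset.cons_bind, ← Multiset.coe_add,
        ← Multiset.coe_add]
      abel
    rw [key] at hn hle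
    rw [LHyp.srcs, Multiset.cons_bind, add_le_add_iff_left] at hle
    obtain ⟨x, w', hx⟩ := ih (Multiset.nodup_add.1 hn).2.1 hle
      (fun e he e' he' => hrank e (Multiset.mem_cons_of_mem he) e' (Multiset.mem_cons_of_mem he'))
      (by simpa using h)
    obtain ⟨p, hp⟩ := Runs.exists_of_perm hw
    exact ⟨_, _, by simpa using hp.seq ((Runs.op_par e r).seq hx)⟩

theorem univ_val_map_sumElim {α : Type*} {a b : ℕ} (f : Fin a → α) (g : Fin b → α) :
    (Finset.univ : Finset (Fin a ⊕ Fin b)).val.map (Sum.elim f g) =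
      (List.ofFn f : Multiset α) + List.ofFn g := by
  rw [← Finset.univ_disjSum_univ, Finset.val_disjSum, Multiset.disjSum, Multiset.map_add,
    Multiset.map_map, Multiset.map_map, Sum.elim_comp_inl, Sum.elim_comp_inr, Fin.univ_val_map,
    Fin.univ_val_map]

end

section

variable {S : MonSig}
open Mor

section Backward

theorem nodes_of_monogamous {a b a' b' : ℕ} {G : LHyp S} {I : Fin a → G.V} {I' : Fin b → G.V}
    {O : Fin a' → G.V} {O' : Fin b' → G.V}
    (h : (LCospan.mk G (Sum.elim I I') (Sum.elim O O')).Monogamous) {A : Multiset G.E}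
    (hA : A.Nodup) (hA' : ∀ e, e ∈ A) :
    ((List.ofFn I : Multiset G.V) + List.ofFn I' + G.tgts A).Nodup ∧
      (∀ v, v ∈ (List.ofFn I : Multiset G.V) + List.ofFn I' + G.tgts A) ∧
      (List.ofFn I : Multiset G.V) + List.ofFn I' + G.tgts A =
        (List.ofFn O : Multiset G.V) + List.ofFn O' + G.srcs A := by
  obtain ⟨h₁, h₂, h₃, h₄, h₅, h₆⟩ := h
  obtain ⟨hin, hin'⟩ := (nodup_and_forall_mem_iff (Sum.elim I I') G.tgt hA hA').2 ⟨h₁, h₃, h₄⟩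
  obtain ⟨hout, hout'⟩ := (nodup_and_forall_mem_iff (Sum.elim O O') G.src hA hA').2 ⟨h₂, h₅, h₆⟩
  rw [univ_val_map_sumElim] at hin hin' hout hout'
  exact ⟨hin, hin', (Multiset.Nodup.ext hin hout).2 fun v => iff_of_true (hin' v) (hout' v)⟩

variable {n m i j : ℕ} {C : LHyp S} {EC : Multiset C.E} {c : Fin i ⊕ Fin j → C.V}
  {q : Fin n ⊕ Fin m → C.V}

/-- A ranked boundary complement is run by first executing the hyperedges which are not
reachable from the outputs of the hole, and then the remaining ones. -/
theorem exists_runs_of_monogamous (hEC : EC.Nodup) (hEC' : ∀ e, e ∈ EC) (hc : Function.Injective c)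
    (hmono : (LCospan.mk C (Sum.elim (fun y => c (.inr y)) (fun x => q (.inl x)))
      (Sum.elim (fun y => q (.inr y)) (fun x => c (.inl x)))).Monogamous)
    (rank : C.E → ℕ) (hrank : ∀ e e', C.Successor e e' → rank e < rank e')
    (hpath : ∀ x y p, ¬ C.PathFrom p (c (.inr y)) (c (.inl x))) :
    ∃ K x₁ x₂ A₁ A₂, EC = A₁ + A₂ ∧
      Runs C (List.ofFn (q ∘ Sum.inl)) x₁ A₁ (K ++ List.ofFn (c ∘ Sum.inl)) ∧
      Runs C (K ++ List.ofFn (c ∘ Sum.inr)) x₂ A₂ (List.ofFn (q ∘ Sum.inr)) := by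
  classical
  obtain ⟨hin, hin', hall⟩ := nodes_of_monogamous (I := c ∘ .inr) (I' := q ∘ .inl)
    (O := q ∘ .inr) (O' := c ∘ .inl) hmono hEC hEC'
  have hout := hall ▸ hin
  let reach : C.E → Prop := fun e =>
    ∃ e₀ y, c (.inr y) ∈ C.src e₀ ∧ Relation.ReflTransGen C.Successor e₀ e
  obtain ⟨A₁, A₂, rfl, hA₁, hA₂⟩ : ∃ A₁ A₂, EC = A₁ + A₂ ∧ (∀ e ∈ A₁, ¬ reach e) ∧
      ∀ e ∈ A₂, reach e :=
    ⟨EC.filter fun e => ¬ reach e, EC.filter reach,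
      (by rw [add_comm, Multiset.filter_add_not]), fun e he => (Multiset.mem_filter.1 he).2,
      fun e he => (Multiset.mem_filter.1 he).2⟩
  have hci : ∀ e ∈ A₂, ∀ x, c (.inl x) ∉ C.tgt e := fun e he x hx => by
    obtain ⟨e₀, y, hy, hr⟩ := hA₂ e he
    obtain ⟨p, hp, hp', rfl, rfl⟩ := List.exists_isChain_ne_nil_of_relationReflTransGen hr
    exact hpath x y p ⟨hp, hp', hy, hx⟩
  rw [LHyp.tgts_add] at hin hin' hall
  rw [LHyp.srcs_add] at hout hall
  have hsrc : ∀ v ∈ C.srcs A₁, v ∈ (List.ofFn (q ∘ Sum.inl) : Multiset C.V) + C.tgts A₁ := by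
    intro v hv
    obtain ⟨e, he, hv⟩ := Multiset.mem_bind.1 hv
    have hv₁ : v ∉ (List.ofFn (c ∘ Sum.inr) : Multiset C.V) := fun h => by
      obtain ⟨y, rfl⟩ := List.mem_ofFn.1 (Multiset.mem_coe.1 h)
      exact hA₁ e he ⟨e, y, hv, .refl⟩
    have hv₂ : v ∉ C.tgts A₂ := fun h => by
      obtain ⟨e', he', hv'⟩ := Multiset.mem_bind.1 h
      obtain ⟨e₀, y, hy, hr⟩ := hA₂ e' he'
      exact hA₁ e he ⟨e₀, y, hy, hr.tail ⟨v, hv', hv⟩⟩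
    have := hin' v
    simp only [Multiset.mem_add] at this ⊢
    tauto
  have hn₁ : ((List.ofFn (q ∘ Sum.inl) : Multiset C.V) + C.tgts A₁).Nodup := by
    refine Multiset.nodup_of_le ?_ hin
    rw [add_assoc, ← add_assoc (List.ofFn (q ∘ Sum.inl) : Multiset C.V)]
    exact (Multiset.le_add_right _ _).trans (Multiset.le_add_left _ _)
  obtain ⟨x₁, w₁, hx₁⟩ := Runs.exists_of_rank hn₁ (nodup_le_of_forall_mem
    (Multiset.nodup_of_le (Multiset.le_add_right _ _) (Multiset.nodup_add.1 hout).2.1) hsrc) rank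
    fun e _ e' _ h => hrank e e' h
  have hcons := hx₁.conservation
  have hdisj := (Multiset.nodup_add.1 hout).2.2
  have hw₁ : (List.ofFn (c ∘ Sum.inl) : Multiset C.V) ≤ w₁ := by
    refine nodup_le_of_forall_mem (Multiset.nodup_add.1 (Multiset.nodup_add.1 hout).1).2.1 ?_
    intro v hv
    have hv₁ : v ∉ C.srcs A₁ := fun h =>
      Multiset.disjoint_left.1 hdisj (Multiset.mem_add.2 (.inr hv)) (Multiset.mem_add.2 (.inl h))
    obtain ⟨x, rfl⟩ := List.mem_ofFn.1 (Multiset.mem_coe.1 hv)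
    have hv₂ : (c ∘ Sum.inl) x ∉ (List.ofFn (c ∘ Sum.inr) : Multiset C.V) := fun h => by
      obtain ⟨y, hy⟩ := List.mem_ofFn.1 (Multiset.mem_coe.1 h)
      exact Sum.inr_ne_inl (hc hy)
    have hv₃ : (c ∘ Sum.inl) x ∉ C.tgts A₂ := fun h => by
      obtain ⟨e, he, hx⟩ := Multiset.mem_bind.1 h
      exact hci e he x hx
    have hv₄ : (c ∘ Sum.inl) x ∈ (List.ofFn (q ∘ Sum.inl) : Multiset C.V) + C.tgts A₁ := by
      have := hin' ((c ∘ Sum.inl) x)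
      simp only [Multiset.mem_add] at this ⊢
      tauto
    rw [hcons] at hv₄
    exact (Multiset.mem_add.1 hv₄).resolve_left hv₁
  obtain ⟨K, hK⟩ := Multiset.le_iff_exists_add.1 hw₁
  induction K using Quotient.inductionOn with | h K => ?_
  have hperm : w₁.Perm (K ++ List.ofFn (c ∘ Sum.inl)) := by
    rw [← Multiset.coe_eq_coe, hK, ← Multiset.coe_add, add_comm]
    rfl
  rw [Multiset.coe_eq_coe.2 hperm] at hcons
  have hsplit : (List.ofFn (q ∘ Sum.inl) : Multiset C.V) + C.tgts A₁ =
      C.srcs A₁ + (K + List.ofFn (c ∘ Sum.inl)) := by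
    rw [Multiset.coe_add]
    exact hcons
  have key : ((K ++ List.ofFn (c ∘ Sum.inr) : List C.V) : Multiset C.V) + C.tgts A₂ =
      List.ofFn (q ∘ Sum.inr) + C.srcs A₂ := by
    refine add_left_cancel (a := C.srcs A₁ + (List.ofFn (c ∘ Sum.inl) : Multiset C.V)) ?_
    rw [← Multiset.coe_add]
    calc _ = (List.ofFn (c ∘ Sum.inr) : Multiset C.V) +
          (C.srcs A₁ + (K + List.ofFn (c ∘ Sum.inl))) + C.tgts A₂ := by abel
      _ = (List.ofFn (c ∘ Sum.inr) : Multiset C.V) + List.ofFn (q ∘ Sum.inl) +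
          (C.tgts A₁ + C.tgts A₂) := by rw [← hsplit]; abel
      _ = _ := by rw [hall]; abel
  have hn₂ : (((K ++ List.ofFn (c ∘ Sum.inr) : List C.V) : Multiset C.V) + C.tgts A₂).Nodup := by
    rw [key]
    refine Multiset.nodup_of_le ?_ hout
    rw [add_assoc, add_le_add_iff_left, ← add_assoc]
    exact Multiset.le_add_left _ _
  obtain ⟨x₂, w₂, hx₂⟩ := Runs.exists_of_rank hn₂ (key ▸ Multiset.le_add_left _ _) rank
    fun e _ e' _ h => hrank e e' h
  have hw₂ : w₂.Perm (List.ofFn (q ∘ Sum.inr)) := by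
    rw [← Multiset.coe_eq_coe]
    refine add_left_cancel (a := C.srcs A₂) ?_
    exact hx₂.conservation.symm.trans (key.trans (add_comm _ _))
  obtain ⟨p₁, hp₁⟩ := Runs.exists_of_perm hperm
  obtain ⟨p₂, hp₂⟩ := Runs.exists_of_perm hw₂
  exact ⟨K, _, _, A₁, A₂, rfl, by simpa using hx₁.seq hp₁, by simpa using hx₂.seq hp₂⟩

variable {k : ℕ}

/-- A term is determined by a decomposition of its interpretation into a part and a context. -/
theorem smc_of_isPushout {d : Term S n m} {l : Term S i j} {c₁ : Term S n (k + i)}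
    {c₂ : Term S (k + j) m} {f : LHom (interp l).G (interp d).G} {g : LHom C (interp d).G}
    {K : List C.V} {A₁ A₂ : Multiset C.E} (hEC : (A₁ + A₂).Nodup) (hEC' : ∀ e, e ∈ A₁ + A₂)
    (hp : IsPushout (discreteHom (interp l).G (Sum.elim (interp l).inp (interp l).out))
      (discreteHom C c) f g)
    (hi : ∀ x, g.nodeMap (q (.inl x)) = (interp d).inp x)
    (ho : ∀ y, g.nodeMap (q (.inr y)) = (interp d).out y) (hK : K.length = k)
    (h₁ : Runs C (List.ofFn (q ∘ Sum.inl)) (mk c₁) A₁ (K ++ List.ofFn (c ∘ Sum.inl)))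
    (h₂ : Runs C (K ++ List.ofFn (c ∘ Sum.inr)) (mk c₂) A₂ (List.ofFn (q ∘ Sum.inr))) :
    SMC S d (c₁.seq (((Term.id k).par l).seq c₂)) := by
  have hbij := hp.bijective_edgeMap
  have h₀ : ∀ x, f.nodeMap (Sum.elim (interp l).inp (interp l).out x) = g.nodeMap (c x) :=
    fun x => congrFun (congrArg LHom.nodeMap hp.1) x
  have hE : A₁.map g.edgeMap + ((edges l).map f.edgeMap + A₂.map g.edgeMap) = edges d := by
    rw [add_left_comm, ← Multiset.map_add]
    have hM : (edges l).map f.edgeMap + (A₁ + A₂).map g.edgeMap =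
        ((edges l).map Sum.inl + (A₁ + A₂).map Sum.inr).map (Sum.elim f.edgeMap g.edgeMap) := by
      simp
    rw [hM]
    refine (Multiset.Nodup.ext (Multiset.Nodup.map hbij.1 ?_) (nodup_edges d)).2 fun e => ?_
    · exact Multiset.nodup_add.2 ⟨(nodup_edges l).map Sum.inl_injective,
        hEC.map Sum.inr_injective, Multiset.disjoint_left.2 (by simp)⟩
    · refine iff_of_true (Multiset.mem_map.2 ?_) (mem_edges d e)
      obtain ⟨z, rfl⟩ := hbij.2 e
      refine ⟨z, ?_, rfl⟩
      rcases z with e | e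
      · simp [mem_edges]
      · simpa using hEC' e
  have hl := ((tRuns_interp l).map f).runs
  have k₁ := h₁.map g
  have k₂ := h₂.map g
  rw [List.map_append] at k₁ k₂
  have e₁ : (List.ofFn (c ∘ Sum.inl)).map g.nodeMap = (List.ofFn (interp l).inp).map f.nodeMap := by
    rw [List.map_ofFn, List.map_ofFn]
    exact congrArg List.ofFn (funext fun x => (h₀ (.inl x)).symm)
  have e₂ : (List.ofFn (c ∘ Sum.inr)).map g.nodeMap = (List.ofFn (interp l).out).map f.nodeMap := by
    rw [List.map_ofFn, List.map_ofFn]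
    exact congrArg List.ofFn (funext fun x => (h₀ (.inr x)).symm)
  have e₃ : (List.ofFn (q ∘ Sum.inl)).map g.nodeMap = List.ofFn (interp d).inp := by
    rw [List.map_ofFn]
    exact congrArg List.ofFn (funext hi)
  have e₄ : (List.ofFn (q ∘ Sum.inr)).map g.nodeMap = List.ofFn (interp d).out := by
    rw [List.map_ofFn]
    exact congrArg List.ofFn (funext ho)
  rw [e₁, e₃] at k₁
  rw [e₂, e₄] at k₂
  have hid := (Runs.id (G := (interp d).G) (K.map g.nodeMap)).par hl
  rw [List.length_map, hK, zero_add] at hid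
  have hrun := k₁.seq (hid.seq k₂)
  rw [hE, iden, mk_mul, mk_seq, mk_seq] at hrun
  exact mk_eq_mk.1 ((tRuns_interp d).runs.unique hrun (nodup_nodes d))

theorem exists_smc_of_convexStep {d e : Term S n m} {l r : Term S i j}
    (h : ConvexStep (interp l) (interp r) (interp d) (interp e)) :
    ∃ (k : ℕ) (c₁ : Term S n (k + i)) (c₂ : Term S (k + j) m),
      SMC S d (c₁.seq (((Term.id k).par l).seq c₂)) ∧
      SMC S e (c₁.seq (((Term.id k).par r).seq c₂)) := by
  obtain ⟨f, C, c, q, g, f', g', -, -, hconv, hp, hp', hi, ho, hi', ho', hc, hmono⟩ := h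
  have hbij := hp.bijective_edgeMap
  have hg : Function.Injective g.edgeMap := hbij.1.comp Sum.inr_injective
  classical
  have : Fintype (interp d).G.E := ⟨(edges d).toFinset, fun e => by simp [mem_edges]⟩
  have := Fintype.ofInjective g.edgeMap hg
  have hEC : (Finset.univ : Finset C.E).val.Nodup := Finset.nodup _
  have hEC' : ∀ e, e ∈ (Finset.univ : Finset C.E).val := Finset.mem_univ
  have h₀ : ∀ x, f.nodeMap (Sum.elim (interp l).inp (interp l).out x) = g.nodeMap (c x) :=
    fun x => congrFun (congrArg LHom.nodeMap hp.1) x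
  have hsucc : ∀ a b, C.Successor a b → (interp d).G.Successor (g.edgeMap a) (g.edgeMap b) := by
    rintro a b ⟨v, hv, hv'⟩
    exact ⟨g.nodeMap v, by rw [g.tgt_eq]; exact List.mem_map_of_mem hv,
      by rw [g.src_eq]; exact List.mem_map_of_mem hv'⟩
  obtain ⟨rank, hrank⟩ := (tRuns_interp d).runs.lay.exists_rank (nodup_nodes d)
  obtain ⟨K, x₁, x₂, A₁, A₂, hA, h₁, h₂⟩ := exists_runs_of_monogamous hEC hEC' hc hmono
    (fun e => rank (g.edgeMap e))
    (fun a b h => hrank _ (mem_edges d _) _ (mem_edges d _) (hsucc a b h)) (by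
      rintro x y p ⟨hne, hp, hy, hx⟩
      have hne' : p.map g.edgeMap ≠ [] := by simpa using hne
      have hp' : (interp d).G.PathFrom (p.map g.edgeMap) (f.nodeMap ((interp l).out y))
          (f.nodeMap ((interp l).inp x)) := by
        refine ⟨hne', List.isChain_map_of_isChain g.edgeMap hsucc hp, ?_, ?_⟩
        · rw [List.head_map, g.src_eq]
          exact List.mem_map.2 ⟨_, hy, (h₀ (.inr y)).symm⟩
        · rw [List.getLast_map, g.tgt_eq]
          exact List.mem_map.2 ⟨_, hx, (h₀ (.inl x)).symm⟩
      obtain ⟨a, ha⟩ := hconv _ ⟨_, rfl⟩ _ ⟨_, rfl⟩ _ hp' _ (List.mem_map_of_mem (List.head_mem hne))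
      exact Sum.inl_ne_inr (hbij.1 (a₁ := .inl a) (a₂ := .inr (p.head hne)) ha))
  rw [hA] at hEC hEC'
  obtain ⟨n', a, c₁, rfl⟩ := exists_rep x₁
  obtain ⟨b, m', c₂, rfl⟩ := exists_rep x₂
  have hn := h₁.dom
  have ha := h₁.cod
  have hb := h₂.dom
  have hm := h₂.cod
  simp only [dom_mk, cod_mk, List.length_append, List.length_ofFn] at hn ha hb hm
  subst hn ha hb hm
  exact ⟨K.length, c₁, c₂, smc_of_isPushout hEC hEC' hp hi ho rfl h₁ h₂,
    smc_of_isPushout hEC hEC' hp' hi' ho' rfl h₁ h₂⟩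

end Backward

end

/-- **Adequacy of convex DPO rewriting.** For a rewriting system `R`
on `Σ`-terms and terms `d, e : n → m`, the syntactic rewriting `d ⇒_R e` (modulo
the SMC laws) holds if and only if the interfaced hypergraph obtained from `⟦d⟧`
rewrites convexly to the one obtained from `⟦e⟧` via the DPO rule
`⟦l⟧ ← i+j → ⟦r⟧` for some rule `(l, r)` in `R`. -/
theorem adequacy {S : MonSig} (R : TermRules S) {n m : ℕ} (d e : Term S n m) :
    SynStep R d e ↔
      ∃ (i j : ℕ) (l r : Term S i j), (⟨i, j, (l, r)⟩ ∈ R) ∧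
        ConvexStep (interp l) (interp r) (interp d) (interp e) := by
  constructor
  · rintro ⟨i, j, l, r, hR, k, c₁, c₂, hd, he⟩
    exact ⟨i, j, l, r, hR, convexStep_of_smc hd he⟩
  · rintro ⟨i, j, l, r, hR, h⟩
    exact ⟨i, j, l, r, hR, exists_smc_of_convexStep h⟩

end SDRT
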